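/- Let k ≥ 2 and let G be any finite simple graph. The non-matching complex NM_k(G) = {G' ⊆ E(G) : ν(G') < k} has vanishing reduced homology (over any field) in all dimensions d ≥ 3k - 3. -/

import Mathlib

attribute [local instance] Classical.propDecidable

variable {W : Type} [LinearOrder W] (F : Type) [Field F]

/-- The simplicial boundary operator on formal `F`-linear combinations of finite sets
(faces `s` of cardinality `n` being generators in degree `n`; the empty face is the
generator of the augmentation degree, so this computes *reduced* homology). -/
noncomputable def bdry (x : Finset W →₀ F) : Finset W →₀ F :=
  x.sum fun s a =>
    ∑ v ∈ s, (a * (-1 : F) ^ (s.filter fun w => w < v).card) • Finsupp.single (s.erase v) (1 : F)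

/-- The reduced homology (with coefficients in `F`) of the complex `K` vanishes in
dimension `d`: every reduced `d`-cycle of `K` is a boundary of a `(d+1)`-chain of `K`.
(A face of dimension `d` has cardinality `d + 1`.) -/
def VanishesAt (K : Finset (Finset W)) (d : ℕ) : Prop :=
  ∀ x : Finset W →₀ F, (∀ s ∈ x.support, s ∈ K ∧ s.card = d + 1) → bdry F x = 0 →
    ∃ y : Finset W →₀ F, (∀ s ∈ y.support, s ∈ K ∧ s.card = d + 2) ∧ bdry F y = x

/-- The link of a face `σ` in the complex `K`. -/
noncomputable def linkOf (K : Finset (Finset W)) (σ : Finset W) : Finset (Finset W) :=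
  K.filter fun τ => Disjoint τ σ ∧ τ ∪ σ ∈ K

/-- A matching: a finite set of non-loop edges that are pairwise vertex-disjoint. -/
def IsMatching {V : Type} (M : Finset (Sym2 V)) : Prop :=
  (∀ e ∈ M, ¬ e.IsDiag) ∧ ∀ e ∈ M, ∀ f ∈ M, e ≠ f → ∀ v, v ∈ e → v ∉ f

/-- The matching number of a finite edge set. -/
noncomputable def nu {V : Type} (E : Finset (Sym2 V)) : ℕ :=
  (E.powerset.filter fun M => IsMatching M).sup Finset.card

/-- The non-matching complex `NM_k(G)` of the graph with edge set `E`: the family of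
edge subsets whose matching number is `< k`. -/
noncomputable def NM {V : Type} (k : ℕ) (E : Finset (Sym2 V)) : Finset (Finset (Sym2 V)) :=
  E.powerset.filter fun σ => nu σ < k

/-!
Stratify the edge sets `s` with `ν(s) < k` by `ν(s) = m`, and each stratum by the Gallai–Edmonds
decomposition of `s`: the set `D` of vertices missed by some maximum matching, its neighbours `A`
outside `D`, and the remaining vertices `C`. These data vary monotonically with `s`, so the homology
of the complex is controlled by the relative homology of the pieces. A piece with fixed `(D, A, C)`
is a product of four families, on disjoint sets of edges: no edge joins `D` to `C`, the edges inside
`C` admit a perfect matching, those inside `D` leave every vertex missable, and those from `A` to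
`D`, read modulo the factor-critical components inside `D`, satisfy Hall's condition with positive
surplus. The last family has no relative homology on more than `2|A|` edges, and by induction the
others have none above `3 ν(D)` and, if `C` is nonempty, `3 ν(C) - 2` edges. If `D` is not the set
of all vertices the total is at most `3m - 1`; the pieces where a given set of vertices lies in `D`
are treated by deleting a vertex and gluing.
-/

open Finset

section RelativeHomology

/-- The sign with which `s.erase v` occurs in the boundary of the generator `s`. -/
noncomputable def boundarySign (s : Finset W) (v : W) : F :=
  (-1) ^ #{w ∈ s | w < v}

/-- The boundary operator `bdry` as a linear map. -/
noncomputable def boundary : (Finset W →₀ F) →ₗ[F] (Finset W →₀ F) :=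
  Finsupp.linearCombination F fun s => ∑ v ∈ s, Finsupp.single (s.erase v) (boundarySign F s v)

/-- The operator inserting `e` into every generator that does not contain it, with the sign making
it a contracting homotopy of the complex of all finite sets. -/
noncomputable def coneMap (e : W) : (Finset W →₀ F) →ₗ[F] (Finset W →₀ F) :=
  Finsupp.linearCombination F fun s =>
    if e ∈ s then 0 else Finsupp.single (insert e s) (boundarySign F s e)

theorem boundary_apply (x : Finset W →₀ F) : boundary F x = bdry F x := by
  rw [boundary, Finsupp.linearCombination_apply, bdry]
  simp only [smul_sum, Finsupp.smul_single, smul_eq_mul, mul_one, boundarySign]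

theorem boundary_single (s : Finset W) (a : F) :
    boundary F (Finsupp.single s a) =
      ∑ v ∈ s, Finsupp.single (s.erase v) (a * boundarySign F s v) := by
  simp [boundary, smul_sum]

theorem coneMap_single_of_mem {s : Finset W} {e : W} (he : e ∈ s) (a : F) :
    coneMap F e (Finsupp.single s a) = 0 := by
  simp [coneMap, he]

theorem coneMap_single_of_notMem {s : Finset W} {e : W} (he : e ∉ s) (a : F) :
    coneMap F e (Finsupp.single s a) = Finsupp.single (insert e s) (a * boundarySign F s e) := by
  simp [coneMap, he]

theorem boundarySign_mul_self (s : Finset W) (v : W) :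
    boundarySign F s v * boundarySign F s v = 1 := by
  rw [boundarySign, ← pow_add, ← two_mul, pow_mul, neg_one_sq, one_pow]

theorem boundarySign_erase_of_lt {s : Finset W} {v w : W} (hv : v ∈ s) (h : v < w) :
    boundarySign F (s.erase v) w = -boundarySign F s w := by
  have hmem : v ∈ ({x ∈ s | x < w} : Finset W) := mem_filter.2 ⟨hv, h⟩
  rw [boundarySign, boundarySign, filter_erase, ← card_erase_add_one hmem, pow_succ]
  ring

theorem boundarySign_erase_of_le (s : Finset W) {v w : W} (h : w ≤ v) :
    boundarySign F (s.erase v) w = boundarySign F s w := by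
  rw [boundarySign, boundarySign, filter_erase, erase_eq_of_notMem]
  exact fun hv => (mem_filter.1 hv).2.not_ge h

theorem boundarySign_insert_self {s : Finset W} {e : W} (he : e ∉ s) :
    boundarySign F (insert e s) e = boundarySign F s e := by
  rw [← boundarySign_erase_of_le F (insert e s) le_rfl, erase_insert he]

theorem boundarySign_mul_boundarySign_erase {s : Finset W} {v w : W} (hv : v ∈ s) (hw : w ∈ s)
    (h : v ≠ w) :
    boundarySign F s v * boundarySign F (s.erase v) w =
      -(boundarySign F s w * boundarySign F (s.erase w) v) := by
  rcases h.lt_or_gt with h | h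
  · rw [boundarySign_erase_of_lt F hv h, boundarySign_erase_of_le F s h.le]; ring
  · rw [boundarySign_erase_of_lt F hw h, boundarySign_erase_of_le F s h.le]; ring

theorem boundary_boundary_single (s : Finset W) (a : F) :
    boundary F (boundary F (Finsupp.single s a)) = 0 := by
  simp only [boundary_single, map_sum]
  rw [sum_sigma']
  refine sum_involution (fun p _ => ⟨p.2, p.1⟩) ?_ ?_ ?_ (fun _ _ => rfl)
  · rintro ⟨v, w⟩ hp
    simp only [mem_sigma, mem_erase] at hp
    rw [mul_assoc, mul_assoc, boundarySign_mul_boundarySign_erase F hp.1 hp.2.2 hp.2.1.symm,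
      erase_right_comm, ← Finsupp.single_add]
    simp
  · rintro ⟨v, w⟩ hp _ heq
    simp only [mem_sigma, mem_erase] at hp
    exact hp.2.1 (congrArg Sigma.fst heq)
  · rintro ⟨v, w⟩ hp
    simp only [mem_sigma, mem_erase] at hp ⊢
    exact ⟨hp.2.2, hp.2.1.symm, hp.1⟩

theorem boundary_boundary (x : Finset W →₀ F) : boundary F (boundary F x) = 0 := by
  induction x using Finsupp.induction_linear with
  | zero => simp
  | add x y hx hy => rw [map_add, map_add, hx, hy, add_zero]
  | single s a => exact boundary_boundary_single F s a

theorem boundarySign_insert_mul_add {s : Finset W} {e v : W} (he : e ∉ s) (hv : v ∈ s) :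
    boundarySign F s e * boundarySign F (insert e s) v +
      boundarySign F s v * boundarySign F (s.erase v) e = 0 := by
  have hve : v ≠ e := fun h => he (h ▸ hv)
  have hswap := boundarySign_mul_boundarySign_erase F (mem_insert_self e s)
    (mem_insert_of_mem hv) hve.symm
  rw [erase_insert he, boundarySign_insert_self F he, erase_insert_of_ne hve.symm,
    boundarySign_insert_self F fun h => he (mem_of_mem_erase h)] at hswap
  linear_combination boundarySign F s v * boundarySign F (insert e s) v * hswap
    - boundarySign F s e * boundarySign F (insert e s) v * boundarySign_mul_self F s v
    - boundarySign F s v * boundarySign F (s.erase v) e * boundarySign_mul_self F (insert e s) v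

theorem boundary_coneMap_single_add (e : W) (s : Finset W) (a : F) :
    boundary F (coneMap F e (Finsupp.single s a)) + coneMap F e (boundary F (Finsupp.single s a)) =
      Finsupp.single s a := by
  by_cases he : e ∈ s
  · rw [coneMap_single_of_mem F he, map_zero, zero_add, boundary_single, map_sum,
      sum_eq_single_of_mem e he]
    · rw [coneMap_single_of_notMem F (notMem_erase e s), insert_erase he,
        boundarySign_erase_of_le F s le_rfl, mul_assoc, boundarySign_mul_self, mul_one]
    · exact fun v _ hve => coneMap_single_of_mem F (mem_erase.2 ⟨hve.symm, he⟩) _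
  · rw [coneMap_single_of_notMem F he, boundary_single, boundary_single, sum_insert he,
      erase_insert he, boundarySign_insert_self F he, mul_assoc, boundarySign_mul_self, mul_one,
      map_sum, add_assoc, ← sum_add_distrib, sum_eq_zero, add_zero]
    intro v hv
    have hve : v ≠ e := fun h => he (h ▸ hv)
    rw [coneMap_single_of_notMem F fun h => he (mem_of_mem_erase h),
      erase_insert_of_ne hve.symm, ← Finsupp.single_add, mul_assoc, mul_assoc, ← mul_add,
      boundarySign_insert_mul_add F he hv, mul_zero, Finsupp.single_zero]

theorem boundary_coneMap_add (e : W) (x : Finset W →₀ F) :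
    boundary F (coneMap F e x) + coneMap F e (boundary F x) = x := by
  induction x using Finsupp.induction_linear with
  | zero => simp
  | add x y hx hy =>
    simp only [map_add]
    rw [add_add_add_comm, hx, hy]
  | single s a => exact boundary_coneMap_single_add F e s a

variable {F}

theorem exists_erase_eq_of_boundary_ne_zero {x : Finset W →₀ F} {t : Finset W}
    (h : boundary F x t ≠ 0) : ∃ s, x s ≠ 0 ∧ ∃ v ∈ s, s.erase v = t := by
  contrapose! h
  rw [boundary, Finsupp.linearCombination_apply, Finsupp.sum, Finsupp.finsetSum_apply]
  refine sum_eq_zero fun s hs => ?_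
  rw [Finsupp.smul_apply, Finsupp.finsetSum_apply, sum_eq_zero, smul_zero]
  exact fun v hv => Finsupp.single_eq_of_ne (h s (Finsupp.mem_support_iff.1 hs) v hv).symm

theorem exists_insert_eq_of_coneMap_ne_zero {e : W} {x : Finset W →₀ F} {t : Finset W}
    (h : coneMap F e x t ≠ 0) : ∃ s, x s ≠ 0 ∧ e ∉ s ∧ insert e s = t := by
  contrapose! h
  rw [coneMap, Finsupp.linearCombination_apply, Finsupp.sum, Finsupp.finsetSum_apply]
  refine sum_eq_zero fun s hs => ?_
  split_ifs with he
  · simp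
  · rw [Finsupp.smul_apply, Finsupp.single_eq_of_ne (h s (Finsupp.mem_support_iff.1 hs) he).symm,
      smul_zero]

variable (F)

/-- The `F`-chains on the members of size `n` of a family of finite sets. -/
def chains (P : Set (Finset W)) (n : ℕ) : Submodule F (Finset W →₀ F) :=
  Finsupp.supported F F {s | s ∈ P ∧ #s = n}

/-- The homology of `P` relative to the sets outside `P` vanishes in size `n`: in the chain complex
spanned by the members of `P`, with the boundary truncated to `P`, every cycle of size `n` bounds.
This is the homology of a pair of complexes when `P` is order-convex. -/
def RelVanishes (P : Set (Finset W)) (n : ℕ) : Prop :=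
  ∀ x ∈ chains F P n, (∀ s ∈ P, boundary F x s = 0) →
    ∃ y ∈ chains F P (n + 1), ∀ s ∈ P, boundary F y s = x s

variable {F} {P : Set (Finset W)} {u : Finset W → Prop} {n : ℕ}

omit [LinearOrder W] in
theorem mem_chains {x : Finset W →₀ F} : x ∈ chains F P n ↔ ∀ s, x s ≠ 0 → s ∈ P ∧ #s = n := by
  simp [chains, Finsupp.mem_supported, Set.subset_def]

omit [LinearOrder W] in
theorem chains_mono {P' : Set (Finset W)} (h : P ⊆ P') : chains F P n ≤ chains F P' n :=
  Finsupp.supported_mono fun _ hs => ⟨h hs.1, hs.2⟩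

omit [LinearOrder W] in
theorem filter_mem_chains {x : Finset W →₀ F} (hx : x ∈ chains F P n) (u : Finset W → Prop)
    [DecidablePred u] : x.filter u ∈ chains F {s ∈ P | u s} n := by
  rw [mem_chains] at hx ⊢
  intro s hs
  have hu : u s := by
    by_contra h
    exact hs (Finsupp.filter_apply_neg u x h)
  rw [Finsupp.filter_apply_pos u x hu] at hs
  exact ⟨⟨(hx s hs).1, hu⟩, (hx s hs).2⟩

theorem boundary_mem_chains {x : Finset W →₀ F} (hx : x ∈ chains F P (n + 1)) :
    boundary F x ∈ chains F Set.univ n := by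
  rw [mem_chains] at hx ⊢
  intro t ht
  obtain ⟨s, hs, v, hv, rfl⟩ := exists_erase_eq_of_boundary_ne_zero ht
  have := card_erase_add_one hv
  exact ⟨trivial, by have := (hx s hs).2; omega⟩

theorem boundary_apply_eq_zero {x : Finset W →₀ F} (hx : x ∈ chains F P n) {t : Finset W}
    (h : ∀ s ∈ P, ¬ t ⊆ s) : boundary F x t = 0 := by
  by_contra hc
  obtain ⟨s, hs, v, -, rfl⟩ := exists_erase_eq_of_boundary_ne_zero hc
  exact h s (mem_chains.1 hx s hs).1 (erase_subset _ _)

theorem boundary_filter_add_filter_not (x : Finset W →₀ F) (u : Finset W → Prop) (s : Finset W) :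
    boundary F (x.filter u) s + boundary F (x.filter fun s => ¬ u s) s = boundary F x s := by
  rw [← Finsupp.add_apply, ← map_add, Finsupp.filter_add_filter_not]

theorem boundary_filter_boundary_apply_eq_zero (hP : P.OrdConnected) {x : Finset W →₀ F}
    (hx : x ∈ chains F P n) {t : Finset W} (ht : t ∈ P) :
    boundary F ((boundary F x).filter (· ∈ P)) t = 0 := by
  suffices boundary F ((boundary F x).filter (· ∉ P)) t = 0 by
    have hsplit := boundary_filter_add_filter_not (boundary F x) (· ∈ P) t
    rwa [this, add_zero, boundary_boundary] at hsplit
  by_contra hc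
  obtain ⟨s, hs, v, -, rfl⟩ := exists_erase_eq_of_boundary_ne_zero hc
  have hsP : s ∉ P := fun h => hs (Finsupp.filter_apply_neg (· ∉ P) _ (not_not.2 h))
  rw [Finsupp.filter_apply_pos (· ∉ P) _ hsP] at hs
  obtain ⟨r, hr, w, -, rfl⟩ := exists_erase_eq_of_boundary_ne_zero hs
  exact hsP (hP.out ht (mem_chains.1 hx r hr).1 ⟨erase_subset _ _, erase_subset _ _⟩)

theorem boundary_apply_eq_zero_of_monotoneOn (hu : MonotoneOn u P) {x : Finset W →₀ F}
    (hx : x ∈ chains F {s ∈ P | ¬ u s} n) {s : Finset W} (hs : s ∈ P) (hus : u s) :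
    boundary F x s = 0 :=
  boundary_apply_eq_zero hx fun _ hr hsr => hr.2 (hu hs hr.1 hsr hus)

theorem boundary_filter_apply_of_monotoneOn (hu : MonotoneOn u P) {x : Finset W →₀ F}
    (hx : x ∈ chains F P n) {s : Finset W} (hs : s ∈ P) (hus : u s) :
    boundary F (x.filter u) s = boundary F x s := by
  rw [← boundary_filter_add_filter_not x u,
    boundary_apply_eq_zero_of_monotoneOn hu (filter_mem_chains hx _) hs hus, add_zero]

theorem RelVanishes.of_isEmpty (h : ∀ s, s ∉ P) (n : ℕ) : RelVanishes F P n :=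
  fun _ _ _ => ⟨0, zero_mem _, fun s hs => absurd hs (h s)⟩

theorem RelVanishes.glue (hP : P.OrdConnected) (hu : MonotoneOn u P)
    (h₁ : RelVanishes F {s ∈ P | u s} n) (h₂ : RelVanishes F {s ∈ P | ¬ u s} n) :
    RelVanishes F P n := by
  intro x hx hbx
  obtain ⟨y, hy, hby⟩ := h₁ (x.filter u) (filter_mem_chains hx u) fun s ⟨hs, hus⟩ => by
    rw [boundary_filter_apply_of_monotoneOn hu hx hs hus, hbx s hs]
  have hyP : y ∈ chains F P (n + 1) := chains_mono (Set.sep_subset _ _) hy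
  have hrest : x - (boundary F y).filter (· ∈ P) ∈ chains F {s ∈ P | ¬ u s} n := by
    have hmem : x - (boundary F y).filter (· ∈ P) ∈ chains F P n :=
      sub_mem hx (chains_mono (fun _ h => h.2) (filter_mem_chains (boundary_mem_chains hyP) _))
    rw [mem_chains] at hmem ⊢
    intro s hs
    obtain ⟨hsP, hcard⟩ := hmem s hs
    refine ⟨⟨hsP, fun hus => hs ?_⟩, hcard⟩
    rw [Finsupp.sub_apply, Finsupp.filter_apply_pos _ _ hsP, hby s ⟨hsP, hus⟩,
      Finsupp.filter_apply_pos _ _ hus, sub_self]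
  obtain ⟨z, hz, hbz⟩ := h₂ _ hrest fun s ⟨hs, _⟩ => by
    rw [map_sub, Finsupp.sub_apply, hbx s hs, boundary_filter_boundary_apply_eq_zero hP hyP hs,
      sub_zero]
  refine ⟨y + z, add_mem hyP (chains_mono (Set.sep_subset _ _) hz), fun s hs => ?_⟩
  rw [map_add, Finsupp.add_apply]
  by_cases hus : u s
  · rw [hby s ⟨hs, hus⟩, Finsupp.filter_apply_pos _ _ hus,
      boundary_apply_eq_zero_of_monotoneOn hu hz hs hus, add_zero]
  · rw [hbz s ⟨hs, hus⟩, Finsupp.sub_apply, Finsupp.filter_apply_pos _ _ hs, add_sub_cancel]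

theorem RelVanishes.sep_of_monotoneOn (hP : P.OrdConnected) (hu : MonotoneOn u P)
    (h₁ : RelVanishes F P (n + 1)) (h₂ : RelVanishes F {s ∈ P | ¬ u s} n) :
    RelVanishes F {s ∈ P | u s} (n + 1) := by
  intro x hx hbx
  have hxP : x ∈ chains F P (n + 1) := chains_mono (Set.sep_subset _ _) hx
  have hbd : (boundary F x).filter (· ∈ P) ∈ chains F {s ∈ P | ¬ u s} n := by
    have hmem := filter_mem_chains (boundary_mem_chains hx) (· ∈ P)
    rw [mem_chains] at hmem ⊢
    intro s hs
    obtain ⟨⟨-, hsP⟩, hcard⟩ := hmem s hs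
    rw [Finsupp.filter_apply_pos _ _ hsP] at hs
    exact ⟨⟨hsP, fun hus => hs (hbx s ⟨hsP, hus⟩)⟩, hcard⟩
  obtain ⟨y, hy, hby⟩ := h₂ _ hbd fun s hs => boundary_filter_boundary_apply_eq_zero hP hxP hs.1
  obtain ⟨z, hz, hbz⟩ := h₁ (x - y) (sub_mem hxP (chains_mono (Set.sep_subset _ _) hy))
    fun s hs => by
      rw [map_sub, Finsupp.sub_apply]
      by_cases hus : u s
      · rw [hbx s ⟨hs, hus⟩, boundary_apply_eq_zero_of_monotoneOn hu hy hs hus, sub_zero]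
      · rw [hby s ⟨hs, hus⟩, Finsupp.filter_apply_pos _ _ hs, sub_self]
  refine ⟨z.filter u, filter_mem_chains hz u, fun s ⟨hs, hus⟩ => ?_⟩
  have hys : y s = 0 := by
    by_contra hc
    exact (mem_chains.1 hy s hc).1.2 hus
  rw [boundary_filter_apply_of_monotoneOn hu hz hs hus, hbz s hs, Finsupp.sub_apply, hys, sub_zero]

theorem RelVanishes.sep_of_locallyConstant (hu : ∀ s ∈ P, ∀ t ∈ P, s ⊆ t → (u s ↔ u t))
    (h : RelVanishes F P n) : RelVanishes F {s ∈ P | u s} n := by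
  have hmono : MonotoneOn u P := fun s hs t ht hst => (hu s hs t ht hst).1
  intro x hx hbx
  have hxP : x ∈ chains F P n := chains_mono (Set.sep_subset _ _) hx
  obtain ⟨z, hz, hbz⟩ := h x hxP fun s hs => by
    by_cases hus : u s
    · exact hbx s ⟨hs, hus⟩
    · exact boundary_apply_eq_zero hx fun r hr hsr => hus ((hu s hs r hr.1 hsr).2 hr.2)
  refine ⟨z.filter u, filter_mem_chains hz u, fun s ⟨hs, hus⟩ => ?_⟩
  rw [boundary_filter_apply_of_monotoneOn hmono hz hs hus, hbz s hs]

theorem RelVanishes.of_forall_insert_mem_iff (e : W) (he : ∀ s, insert e s ∈ P ↔ s ∈ P) (n : ℕ) :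
    RelVanishes F P n := by
  intro x hx hbx
  rw [mem_chains] at hx
  refine ⟨coneMap F e x, mem_chains.2 fun t ht => ?_, fun t ht => ?_⟩
  · obtain ⟨s, hs, hes, rfl⟩ := exists_insert_eq_of_coneMap_ne_zero ht
    exact ⟨(he s).2 (hx s hs).1, by rw [card_insert_of_notMem hes, (hx s hs).2]⟩
  · have hcone : coneMap F e (boundary F x) t = 0 := by
      by_contra hc
      obtain ⟨s, hs, -, rfl⟩ := exists_insert_eq_of_coneMap_ne_zero hc
      exact hs (hbx s ((he s).1 ht))
    have hhomotopy := DFunLike.congr_fun (boundary_coneMap_add F e x) t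
    rwa [Finsupp.add_apply, hcone, add_zero] at hhomotopy

theorem RelVanishes.vanishesAt {K : Finset (Finset W)} {d : ℕ}
    (hK : IsLowerSet (K : Set (Finset W))) (h : RelVanishes F (K : Set (Finset W)) (d + 1)) :
    VanishesAt F K d := by
  intro x hx hbx
  have hxK : x ∈ chains F (K : Set (Finset W)) (d + 1) :=
    mem_chains.2 fun s hs => hx s (Finsupp.mem_support_iff.2 hs)
  obtain ⟨y, hy, hby⟩ := h x hxK fun s _ => by rw [boundary_apply, hbx, Finsupp.zero_apply]
  refine ⟨y, fun s hs => mem_chains.1 hy s (Finsupp.mem_support_iff.1 hs), ?_⟩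
  rw [← boundary_apply]
  ext s
  by_cases hs : s ∈ K
  · exact hby s hs
  · rw [boundary_apply_eq_zero hy fun t ht hst => hs (hK hst ht)]
    by_contra hc
    exact hs (mem_chains.1 hxK s (Ne.symm hc)).1

end RelativeHomology

section StableVanishing

/-- The sets whose part outside `E` lies in `Q` and whose part inside `E` lies in `P`; for
simplicial complexes `Q`, `P` on complementary vertex sets this is their join. -/
def joinOn (E : Finset W) (Q P : Set (Finset W)) : Set (Finset W) :=
  {s | s \ E ∈ Q ∧ s ∩ E ∈ P}

/-- Vanishing of the relative homology of `P`, as a family of subsets of `E`, in sizes above `b`, in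
the stable form inherited by products: joining `P` with any order-convex family on elements outside
`E` raises the range of vanishing of that family by at most `b`. -/
def StablyVanishesAbove (E : Finset W) (P : Set (Finset W)) (b : ℕ) : Prop :=
  ∀ Q : Set (Finset W), Q.OrdConnected → (∀ s ∈ Q, Disjoint s E) →
    ∀ g, (∀ n, g < n → RelVanishes F Q n) → ∀ n, g + b < n → RelVanishes F (joinOn E Q P) n

variable {F} {E E₁ E₂ : Finset W} {P P' P₁ P₂ Q : Set (Finset W)} {b b₁ b₂ : ℕ}

omit [LinearOrder W] in
theorem ordConnected_sep_eq {α : Type*} [PartialOrder α] {f : Finset W → α}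
    (hP : P.OrdConnected) (hf : MonotoneOn f P) (a : α) : {s ∈ P | f s = a}.OrdConnected := by
  refine Set.ordConnected_def.2 fun s hs r hr t ht => ?_
  have htP : t ∈ P := hP.out hs.1 hr.1 ht
  exact ⟨htP, le_antisymm (hr.2 ▸ hf htP hr.1 ht.2) (hs.2 ▸ hf hs.1 htP ht.1)⟩

omit [LinearOrder W] in
theorem joinOn_ordConnected (hQ : Q.OrdConnected) (hP : P.OrdConnected) (E : Finset W) :
    (joinOn E Q P).OrdConnected :=
  (hQ.preimage_mono fun _ _ h => sdiff_subset_sdiff h subset_rfl).inter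
    (hP.preimage_mono fun _ _ h => inter_subset_inter_right h)

omit [LinearOrder W] in
theorem joinOn_congr (h : ∀ s ⊆ E, s ∈ P ↔ s ∈ P') (Q : Set (Finset W)) :
    joinOn E Q P = joinOn E Q P' :=
  Set.ext fun _ => and_congr_right fun _ => h _ inter_subset_right

namespace StablyVanishesAbove

theorem congr (h : StablyVanishesAbove F E P b) (hP : ∀ s ⊆ E, s ∈ P ↔ s ∈ P') :
    StablyVanishesAbove F E P' b := by
  intro Q hQ hQE g hg n hn
  rw [← joinOn_congr hP]
  exact h Q hQ hQE g hg n hn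

theorem mono (h : StablyVanishesAbove F E P b₁) (hb : b₁ ≤ b₂) : StablyVanishesAbove F E P b₂ :=
  fun Q hQ hQE g hg n hn => h Q hQ hQE g hg n (by omega)

theorem of_isEmpty (h : ∀ s ⊆ E, s ∉ P) (b : ℕ) : StablyVanishesAbove F E P b :=
  fun _ _ _ _ _ n _ => RelVanishes.of_isEmpty (fun _ hs => h _ inter_subset_right hs.2) n

theorem singleton_empty (E : Finset W) : StablyVanishesAbove F E {∅} 0 := by
  intro Q _ hQE g hg n hn
  have hjoin : joinOn E Q {∅} = Q := by
    ext s
    simp only [joinOn, Set.mem_ofPred_eq, Set.mem_singleton_iff, ← disjoint_iff_inter_eq_empty]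
    exact ⟨fun h => sdiff_eq_self_of_disjoint h.2 ▸ h.1,
      fun h => ⟨(sdiff_eq_self_of_disjoint (hQE s h)).symm ▸ h, hQE s h⟩⟩
  rw [hjoin]
  exact hg n hn

theorem relVanishes (h : StablyVanishesAbove F E P b) {n : ℕ} (hn : b < n) :
    RelVanishes F {s ∈ P | s ⊆ E} n := by
  have hempty : ∀ m, 0 < m → RelVanishes F ({∅} : Set (Finset W)) m := by
    intro m hm x hx _
    refine ⟨0, zero_mem _, fun s hs => ?_⟩
    rw [map_zero, Finsupp.zero_apply]
    by_contra hc
    have hcard := (mem_chains.1 hx s (Ne.symm hc)).2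
    rw [hs, card_empty] at hcard
    omega
  have hjoin : joinOn E {∅} P = {s ∈ P | s ⊆ E} := by
    ext s
    simp only [joinOn, Set.mem_ofPred_eq, Set.mem_singleton_iff, sdiff_eq_empty_iff_subset]
    exact ⟨fun ⟨h, hs⟩ => ⟨inter_eq_left.2 h ▸ hs, h⟩,
      fun ⟨hs, h⟩ => ⟨h, (inter_eq_left.2 h).symm ▸ hs⟩⟩
  rw [← hjoin]
  exact h _ Set.ordConnected_singleton (by simp) 0 hempty n (by omega)

theorem glue {u : Finset W → Prop} (hP : P.OrdConnected) (hu : MonotoneOn u P)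
    (h₁ : StablyVanishesAbove F E {s ∈ P | u s} b)
    (h₂ : StablyVanishesAbove F E {s ∈ P | ¬ u s} b) : StablyVanishesAbove F E P b := by
  intro Q hQ hQE g hg n hn
  refine RelVanishes.glue (u := fun s => u (s ∩ E)) (joinOn_ordConnected hQ hP E)
    (fun s hs t ht hst => hu hs.2 ht.2 (inter_subset_inter_right hst)) ?_ ?_
  · convert h₁ Q hQ hQE g hg n hn using 1
    exact Set.ext fun _ => and_assoc
  · convert h₂ Q hQ hQE g hg n hn using 1
    exact Set.ext fun _ => and_assoc

theorem sep_of_monotoneOn {u : Finset W → Prop} (hP : P.OrdConnected) (hu : MonotoneOn u P)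
    (h₁ : StablyVanishesAbove F E P (b + 1))
    (h₂ : StablyVanishesAbove F E {s ∈ P | ¬ u s} b) :
    StablyVanishesAbove F E {s ∈ P | u s} (b + 1) := by
  intro Q hQ hQE g hg n hn
  obtain ⟨n, rfl⟩ : ∃ k, n = k + 1 := ⟨n - 1, by omega⟩
  convert RelVanishes.sep_of_monotoneOn (u := fun s => u (s ∩ E)) (joinOn_ordConnected hQ hP E)
    (fun s hs t ht hst => hu hs.2 ht.2 (inter_subset_inter_right hst))
    (h₁ Q hQ hQE g hg (n + 1) hn) ?_ using 1
  · exact Set.ext fun _ => and_assoc.symm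
  · convert h₂ Q hQ hQE g hg n (by omega) using 1
    exact Set.ext fun _ => and_assoc

theorem sep_of_locallyConstant {u : Finset W → Prop}
    (hu : ∀ s ∈ P, ∀ t ∈ P, s ⊆ t → (u s ↔ u t)) (h : StablyVanishesAbove F E P b) :
    StablyVanishesAbove F E {s ∈ P | u s} b := by
  intro Q hQ hQE g hg n hn
  convert RelVanishes.sep_of_locallyConstant (u := fun s => u (s ∩ E))
    (fun s hs t ht hst => hu _ hs.2 _ ht.2 (inter_subset_inter_right hst))
    (h Q hQ hQE g hg n hn) using 1
  exact Set.ext fun _ => and_assoc.symm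

theorem of_forall_insert_mem_iff {e : W} (heE : e ∈ E)
    (he : ∀ s ⊆ E, insert e s ∈ P ↔ s ∈ P) (b : ℕ) : StablyVanishesAbove F E P b := by
  intro Q _ _ g _ n _
  refine RelVanishes.of_forall_insert_mem_iff e (fun s => ?_) n
  rw [joinOn, Set.mem_ofPred_eq, Set.mem_ofPred_eq, insert_sdiff_of_mem s heE,
    insert_inter_of_mem heE, he _ inter_subset_right]

theorem univ (E : Finset W) : StablyVanishesAbove F E Set.univ 0 := by
  rcases E.eq_empty_or_nonempty with rfl | ⟨e, he⟩
  · refine (singleton_empty ∅).congr fun s hs => ?_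
    simp [subset_empty.1 hs]
  · exact of_forall_insert_mem_iff he (fun _ _ => Iff.rfl) 0

theorem sep_nonempty (E : Finset W) : StablyVanishesAbove F E {s | s.Nonempty} 1 := by
  refine (sep_of_monotoneOn (u := Finset.Nonempty) Set.ordConnected_univ
    (fun s _ t _ hst hs => hs.mono hst) ((univ E).mono zero_le_one)
    ((singleton_empty E).congr fun s _ => ?_)).congr fun s _ => ?_
  · simp
  · simp

theorem of_inter {E' : Finset W} (hE' : E' ⊆ E) (h : E' = E → StablyVanishesAbove F E P b) :
    StablyVanishesAbove F E {s | s ∩ E' ∈ P} b := by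
  by_cases heq : E' = E
  · refine (h heq).congr fun s hs => ?_
    rw [heq, Set.mem_ofPred_eq, inter_eq_left.2 hs]
  · obtain ⟨e, he, heE'⟩ := exists_of_ssubset (hE'.ssubset_of_ne heq)
    refine of_forall_insert_mem_iff he (fun s _ => ?_) b
    rw [Set.mem_ofPred_eq, Set.mem_ofPred_eq, insert_inter_of_notMem heE']

theorem prod_union (hdisj : Disjoint E₁ E₂) (hP₁ : P₁.OrdConnected)
    (h₁ : StablyVanishesAbove F E₁ P₁ b₁) (h₂ : StablyVanishesAbove F E₂ P₂ b₂) :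
    StablyVanishesAbove F (E₁ ∪ E₂) {s | s ∩ E₁ ∈ P₁ ∧ s ∩ E₂ ∈ P₂} (b₁ + b₂) := by
  intro Q hQ hQE g hg n hn
  simp only [disjoint_union_right] at hQE
  have hvan := h₂ (joinOn E₁ Q P₁) (joinOn_ordConnected hQ hP₁ E₁) ?_ (g + b₁)
    (h₁ Q hQ (fun s hs => (hQE s hs).1) g hg) n (by omega)
  · convert hvan using 1
    ext s
    have hdiff : s \ (E₁ ∪ E₂) = (s \ E₂) \ E₁ := by rw [sdiff_sdiff, union_comm]; rfl
    have hinter₁ : s ∩ (E₁ ∪ E₂) ∩ E₁ = (s \ E₂) ∩ E₁ := by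
      rw [inter_assoc, inter_eq_right.2 subset_union_left, sdiff_inter_right_comm,
        sdiff_eq_self_of_disjoint (hdisj.mono_left inter_subset_right)]
    have hinter₂ : s ∩ (E₁ ∪ E₂) ∩ E₂ = s ∩ E₂ := by
      rw [inter_assoc, inter_eq_right.2 subset_union_right]
    simp only [joinOn, Set.mem_ofPred_eq, hdiff, hinter₁, hinter₂, and_assoc]
  · rintro s ⟨hs, -⟩
    rw [← sdiff_union_inter s E₁, disjoint_union_left]
    exact ⟨(hQE _ hs).2, hdisj.mono_left inter_subset_right⟩

theorem prod (hE₁ : E₁ ⊆ E) (hE₂ : E₂ ⊆ E) (hdisj : Disjoint E₁ E₂) (hP₁ : P₁.OrdConnected)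
    (h₁ : StablyVanishesAbove F E₁ P₁ b₁) (h₂ : StablyVanishesAbove F E₂ P₂ b₂) :
    StablyVanishesAbove F E {s | s ∩ E₁ ∈ P₁ ∧ s ∩ E₂ ∈ P₂} (b₁ + b₂) := by
  refine (of_inter (union_subset hE₁ hE₂) fun h => h ▸ prod_union hdisj hP₁ h₁ h₂).congr
    fun s _ => ?_
  simp only [Set.mem_ofPred_eq, inter_assoc, inter_eq_right.2 (subset_union_left (s₁ := E₁)),
    inter_eq_right.2 (subset_union_right (s₂ := E₂))]

theorem prod₃ {E₃ : Finset W} {P₃ : Set (Finset W)} {b₃ : ℕ} (hE₁ : E₁ ⊆ E) (hE₂ : E₂ ⊆ E)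
    (hE₃ : E₃ ⊆ E) (h₁₂ : Disjoint E₁ E₂) (h₁₃ : Disjoint E₁ E₃) (h₂₃ : Disjoint E₂ E₃)
    (hP₁ : P₁.OrdConnected) (hP₂ : P₂.OrdConnected) (h₁ : StablyVanishesAbove F E₁ P₁ b₁)
    (h₂ : StablyVanishesAbove F E₂ P₂ b₂) (h₃ : StablyVanishesAbove F E₃ P₃ b₃) :
    StablyVanishesAbove F E {s | s ∩ E₁ ∈ P₁ ∧ s ∩ E₂ ∈ P₂ ∧ s ∩ E₃ ∈ P₃} (b₁ + (b₂ + b₃)) := by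
  refine (prod hE₁ (union_subset hE₂ hE₃) (disjoint_union_right.2 ⟨h₁₂, h₁₃⟩) hP₁ h₁
    (prod_union h₂₃ hP₂ h₂ h₃)).congr fun s _ => ?_
  simp only [Set.mem_ofPred_eq, inter_assoc, inter_eq_right.2 (subset_union_left (s₁ := E₂)),
    inter_eq_right.2 (subset_union_right (s₂ := E₃))]

theorem of_fibers {α : Type*} [PartialOrder α] {f : Finset W → α} (hP : P.OrdConnected)
    (hf : MonotoneOn f P) (h : ∀ a, StablyVanishesAbove F E {s ∈ P | f s = a} b) :
    StablyVanishesAbove F E P b := by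
  suffices H : ∀ (A : Finset α) (P : Set (Finset W)), P.OrdConnected → MonotoneOn f P →
      (∀ s ∈ P, f s ∈ A) → (∀ a, StablyVanishesAbove F E {s ∈ P | f s = a} b) →
      StablyVanishesAbove F E P b by
    refine (H (E.powerset.image f) (P ∩ Set.Iic E) (hP.inter Set.ordConnected_Iic)
      (hf.mono Set.inter_subset_left)
      (fun s hs => mem_image_of_mem f (mem_powerset.2 hs.2)) fun a => ?_).congr fun s hs => ?_
    · refine (h a).congr fun s hs => ?_
      simp [hs]
    · simp [hs]
  intro A
  induction A using Finset.strongInduction with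
  | H A ih =>
    intro P hP hf hfA h
    rcases A.eq_empty_or_nonempty with rfl | hA
    · exact of_isEmpty (fun s _ hs => notMem_empty _ (hfA s hs)) b
    obtain ⟨a, ha⟩ := A.exists_maximal hA
    have hmono : MonotoneOn (fun s => f s = a) P := fun s hs t ht hst hsa =>
      (ha.eq_of_le (hfA t ht) (hsa ▸ hf hs ht hst)).symm
    refine glue hP hmono (h a) (ih (A.erase a) (erase_ssubset ha.1) _ ?_
      (hf.mono (Set.sep_subset _ _)) (fun s hs => mem_erase.2 ⟨hs.2, hfA s hs.1⟩) fun c => ?_)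
    · exact Set.ordConnected_def.2 fun s hs r hr t ht =>
        have htP := hP.out hs.1 hr.1 ht
        ⟨htP, fun hta => hr.2 (hmono htP hr.1 ht.2 hta)⟩
    · by_cases hc : c = a
      · exact of_isEmpty (fun s _ hs => hs.1.2 (hs.2.trans hc)) b
      · refine (h c).congr fun s _ => ⟨fun hs => ⟨⟨hs.1, fun hsa => hc ?_⟩, hs.2⟩,
          fun hs => ⟨hs.1.1, hs.2⟩⟩
        exact hs.2.symm.trans hsa

end StablyVanishesAbove

end StableVanishing

section Hall

variable {ι α π : Type*} (src : ι → α) (dst : ι → π)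

/-- The endpoints in `π` of the edges of `β` whose endpoint in `α` lies in `S`; the edges of a
bipartite graph are indexed by `ι` and have endpoints given by `src` and `dst`. -/
noncomputable def neighbors (β : Finset ι) (S : Finset α) : Finset π :=
  {e ∈ β | src e ∈ S}.image dst

/-- Hall's condition for matching all of `A` along the edges `β`. -/
def HallCondition (A : Finset α) (β : Finset ι) : Prop :=
  ∀ S ⊆ A, #S ≤ #(neighbors src dst β S)

/-- Every nonempty subset of `A` has more neighbors than elements along the edges `β`. -/
def PositiveSurplus (A : Finset α) (β : Finset ι) : Prop :=
  ∀ S ⊆ A, S.Nonempty → #S < #(neighbors src dst β S)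

/-- The union of all tight subsets of `A`. Under Hall's condition it is the largest tight set. -/
noncomputable def tightCore (A : Finset α) (β : Finset ι) : Finset α :=
  {S ∈ A.powerset | #(neighbors src dst β S) = #S}.biUnion id

variable {src dst} {A S T : Finset α} {p : Finset π} {β γ : Finset ι}

theorem mem_neighbors {x : π} :
    x ∈ neighbors src dst β S ↔ ∃ e ∈ β, src e ∈ S ∧ dst e = x := by
  simp [neighbors, and_assoc]

theorem neighbors_mono (hβ : β ⊆ γ) (hS : S ⊆ T) :
    neighbors src dst β S ⊆ neighbors src dst γ T := by
  intro x hx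
  obtain ⟨e, he, hes, rfl⟩ := mem_neighbors.1 hx
  exact mem_neighbors.2 ⟨e, hβ he, hS hes, rfl⟩

theorem neighbors_congr (h : ∀ e, src e ∈ S → (e ∈ β ↔ e ∈ γ)) :
    neighbors src dst β S = neighbors src dst γ S := by
  rw [neighbors, neighbors]
  congr 1
  ext e
  simp only [mem_filter]
  exact and_congr_left fun he => h e he

theorem neighbors_union (β : Finset ι) (S T : Finset α) :
    neighbors src dst β (S ∪ T) = neighbors src dst β S ∪ neighbors src dst β T := by
  simp only [neighbors, mem_union, filter_or, image_union]

theorem HallCondition.mono (h : HallCondition src dst A β) (hβ : β ⊆ γ) :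
    HallCondition src dst A γ :=
  fun S hS => (h S hS).trans (card_le_card (neighbors_mono hβ subset_rfl))

theorem PositiveSurplus.mono (h : PositiveSurplus src dst A β) (hβ : β ⊆ γ) :
    PositiveSurplus src dst A γ :=
  fun S hS hne => (h S hS hne).trans_le (card_le_card (neighbors_mono hβ subset_rfl))

theorem hallCondition_congr (h : ∀ e, src e ∈ A → (e ∈ β ↔ e ∈ γ)) :
    HallCondition src dst A β ↔ HallCondition src dst A γ :=
  forall₂_congr fun _ hS => by rw [neighbors_congr fun e he => h e (hS he)]

theorem positiveSurplus_congr (h : ∀ e, src e ∈ A → (e ∈ β ↔ e ∈ γ)) :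
    PositiveSurplus src dst A β ↔ PositiveSurplus src dst A γ :=
  forall₂_congr fun _ hS => by rw [neighbors_congr fun e he => h e (hS he)]

theorem ordConnected_hallCondition : {β | HallCondition src dst A β}.OrdConnected :=
  IsUpperSet.ordConnected fun _ _ hβ h => HallCondition.mono h hβ

theorem ordConnected_positiveSurplus : {β | PositiveSurplus src dst A β}.OrdConnected :=
  IsUpperSet.ordConnected fun _ _ hβ h => PositiveSurplus.mono h hβ

theorem tightCore_congr (h : ∀ e, src e ∈ A → (e ∈ β ↔ e ∈ γ)) :
    tightCore src dst A β = tightCore src dst A γ := by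
  unfold tightCore
  congr 1
  exact filter_congr fun S hS => by rw [neighbors_congr fun e he => h e (mem_powerset.1 hS he)]

theorem tightCore_subset (A : Finset α) (β : Finset ι) : tightCore src dst A β ⊆ A :=
  biUnion_subset.2 fun _ hS => mem_powerset.1 (mem_filter.1 hS).1

theorem subset_tightCore (hS : S ⊆ A) (h : #(neighbors src dst β S) = #S) :
    S ⊆ tightCore src dst A β :=
  subset_biUnion_of_mem id (mem_filter.2 ⟨mem_powerset.2 hS, h⟩)

namespace HallCondition

theorem tight_union (h : HallCondition src dst A β) (hS : S ⊆ A) (hT : T ⊆ A)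
    (hStight : #(neighbors src dst β S) = #S) (hTtight : #(neighbors src dst β T) = #T) :
    #(neighbors src dst β (S ∪ T)) = #(S ∪ T) := by
  have hunion := h (S ∪ T) (union_subset hS hT)
  have hinter : #(S ∩ T) ≤ #(neighbors src dst β S ∩ neighbors src dst β T) :=
    (h (S ∩ T) (inter_subset_left.trans hS)).trans <| card_le_card <|
      subset_inter (neighbors_mono subset_rfl inter_subset_left)
        (neighbors_mono subset_rfl inter_subset_right)
  have hN := card_union_add_card_inter (neighbors src dst β S) (neighbors src dst β T)
  have hST := card_union_add_card_inter S T
  rw [neighbors_union] at hunion ⊢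
  omega

theorem card_neighbors_tightCore (h : HallCondition src dst A β) :
    #(neighbors src dst β (tightCore src dst A β)) = #(tightCore src dst A β) := by
  suffices H : ∀ 𝒯 ⊆ ({S ∈ A.powerset | #(neighbors src dst β S) = #S} : Finset (Finset α)),
      #(neighbors src dst β (𝒯.biUnion id)) = #(𝒯.biUnion id) from H _ subset_rfl
  intro 𝒯
  induction 𝒯 using Finset.induction_on with
  | empty => simp [neighbors]
  | insert S 𝒯 _ ih =>
    intro hsub
    obtain ⟨hS, h𝒯⟩ := insert_subset_iff.1 hsub
    rw [mem_filter, mem_powerset] at hS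
    rw [biUnion_insert]
    refine h.tight_union hS.1 (biUnion_subset.2 fun T hT => ?_) hS.2 (ih h𝒯)
    exact mem_powerset.1 (mem_filter.1 (h𝒯 hT)).1

theorem tightCore_anti (h : HallCondition src dst A β) (hβ : β ⊆ γ) :
    tightCore src dst A γ ⊆ tightCore src dst A β := by
  have hsub := tightCore_subset (src := src) (dst := dst) A γ
  refine subset_tightCore hsub (le_antisymm ?_ (h _ hsub))
  rw [← (h.mono hβ).card_neighbors_tightCore]
  exact card_le_card (neighbors_mono hβ subset_rfl)

theorem neighbors_tightCore_anti (h : HallCondition src dst A β) (hβ : β ⊆ γ) :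
    neighbors src dst γ (tightCore src dst A γ) ⊆ neighbors src dst β (tightCore src dst A β) := by
  refine subset_trans ?_ (neighbors_mono subset_rfl (h.tightCore_anti hβ))
  refine (eq_of_subset_of_card_le (neighbors_mono hβ subset_rfl) ?_).superset
  rw [(h.mono hβ).card_neighbors_tightCore]
  exact h _ (tightCore_subset A γ)

end HallCondition

variable (src dst) in
/-- The largest tight set together with its neighbors. The order is reversed so that adding edges
increases this pair as long as Hall's condition holds. -/
noncomputable def tightData (A : Finset α) (β : Finset ι) : (Finset α × Finset π)ᵒᵈ :=
  OrderDual.toDual (tightCore src dst A β, neighbors src dst β (tightCore src dst A β))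

theorem tightData_eq_iff :
    tightData src dst A β = OrderDual.toDual (S, p) ↔
      tightCore src dst A β = S ∧ neighbors src dst β S = p := by
  rw [tightData, OrderDual.toDual_inj, Prod.mk.injEq]
  exact and_congr_right fun h => by rw [h]

theorem monotoneOn_tightData :
    MonotoneOn (tightData src dst A) {β | HallCondition src dst A β} :=
  fun _ hβ _ _ hle => ⟨HallCondition.tightCore_anti hβ hle,
    HallCondition.neighbors_tightCore_anti hβ hle⟩

theorem PositiveSurplus.hallCondition (h : PositiveSurplus src dst A β) :
    HallCondition src dst A β := by
  intro S hS
  rcases S.eq_empty_or_nonempty with rfl | hne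
  · simp
  · exact (h S hS hne).le

theorem HallCondition.positiveSurplus_iff (h : HallCondition src dst A β) :
    PositiveSurplus src dst A β ↔ tightCore src dst A β = ∅ := by
  refine ⟨fun hP => ?_, fun hcore S hS hne => (h S hS).lt_of_ne fun heq => ?_⟩
  · by_contra hne
    exact (hP _ (tightCore_subset A β) (nonempty_iff_ne_empty.2 hne)).ne'
      h.card_neighbors_tightCore
  · exact hne.ne_empty (subset_empty.1 (hcore ▸ subset_tightCore hS heq.symm))

theorem neighbors_filter_union_subset (hS : neighbors src dst β S ⊆ p) :
    neighbors src dst β S ∪ neighbors src dst {e ∈ β | dst e ∉ p} T ⊆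
        neighbors src dst β (S ∪ T) ∧
      Disjoint (neighbors src dst β S) (neighbors src dst {e ∈ β | dst e ∉ p} T) := by
  refine ⟨?_, disjoint_left.2 fun x hx hxT => ?_⟩
  · rw [neighbors_union]
    exact union_subset_union subset_rfl (neighbors_mono (filter_subset _ _) subset_rfl)
  · obtain ⟨e, he, -, rfl⟩ := mem_neighbors.1 hxT
    exact (mem_filter.1 he).2 (hS hx)

theorem neighbors_union_subset (hS : neighbors src dst β S ⊆ p) :
    neighbors src dst β (S ∪ T) ⊆ p ∪ neighbors src dst {e ∈ β | dst e ∉ p} T := by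
  intro x hx
  obtain ⟨e, he, hes, rfl⟩ := mem_neighbors.1 hx
  by_cases hep : dst e ∈ p
  · exact mem_union_left _ hep
  · refine mem_union_right _ (mem_neighbors.2 ⟨e, mem_filter.2 ⟨he, hep⟩, ?_, rfl⟩)
    exact (mem_union.1 hes).resolve_left fun h => hep (hS (mem_neighbors.2 ⟨e, he, h, rfl⟩))

theorem hallCondition_and_tightCore_eq_iff (hS : S ⊆ A) :
    (HallCondition src dst A β ∧ tightCore src dst A β = S ∧ neighbors src dst β S = p) ↔
      #p = #S ∧ neighbors src dst β S ⊆ p ∧ HallCondition src dst S β ∧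
        PositiveSurplus src dst (A \ S) {e ∈ β | dst e ∉ p} := by
  constructor
  · rintro ⟨hH, hcore, hN⟩
    have hcard : #p = #S := by rw [← hN, ← hcore]; exact hH.card_neighbors_tightCore
    refine ⟨hcard, hN.subset, fun T hT => hH T (hT.trans hS), fun T hT hne => ?_⟩
    have hdisj : Disjoint S T := disjoint_sdiff.mono_right hT
    have hTA : S ∪ T ⊆ A := union_subset hS (hT.trans sdiff_subset)
    have hlt : #(S ∪ T) < #(neighbors src dst β (S ∪ T)) := by
      refine (hH _ hTA).lt_of_ne fun heq => ?_
      have hTS : T ⊆ S := subset_union_right.trans (hcore ▸ subset_tightCore hTA heq.symm)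
      exact hne.ne_empty (disjoint_self.1 (hdisj.mono_left hTS))
    have hle := (card_le_card (neighbors_union_subset (T := T) hN.subset)).trans
      (card_union_le _ _)
    rw [card_union_of_disjoint hdisj] at hlt
    omega
  · rintro ⟨hcard, hsub, hH, hP⟩
    have hcardN (T U : Finset α) (hT : T ⊆ S) : #(neighbors src dst β T) +
        #(neighbors src dst {e ∈ β | dst e ∉ p} U) ≤ #(neighbors src dst β (T ∪ U)) := by
      obtain ⟨h, hdisj⟩ := neighbors_filter_union_subset (T := U)
        ((neighbors_mono subset_rfl hT).trans hsub)
      rw [← card_union_of_disjoint hdisj]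
      exact card_le_card h
    have hsplit (T : Finset α) (hT : T ⊆ A) : #T ≤ #(neighbors src dst β T) ∧
        (#(neighbors src dst β T) = #T → T ⊆ S) := by
      have hle := hcardN (T ∩ S) (T \ S) inter_subset_right
      rw [union_comm, sdiff_union_inter] at hle
      have hTS := card_sdiff_add_card_inter T S
      have hHT := hH (T ∩ S) inter_subset_right
      rcases (T \ S).eq_empty_or_nonempty with h | h
      · exact ⟨by simp [h] at hTS; omega, fun _ => sdiff_eq_empty_iff_subset.1 h⟩
      · have := hP (T \ S) (sdiff_subset_sdiff hT subset_rfl) h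
        exact ⟨by omega, fun _ => by omega⟩
    have hHA : HallCondition src dst A β := fun T hT => (hsplit T hT).1
    have hN : neighbors src dst β S = p :=
      eq_of_subset_of_card_le hsub (hcard ▸ hH S subset_rfl)
    refine ⟨hHA, subset_antisymm ?_ (subset_tightCore hS (hN ▸ hcard)), hN⟩
    exact (hsplit _ (tightCore_subset A β)).2 hHA.card_neighbors_tightCore

theorem hallCondition_iff_of_mem {a : α} (ha : a ∈ A) :
    HallCondition src dst A β ↔ HallCondition src dst (A.erase a) β ∧
      ∃ e ∈ β, src e = a ∧ dst e ∉ neighbors src dst β (tightCore src dst (A.erase a) β) := by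
  have hmem {S : Finset α} {e : ι} (he : e ∈ β) (hS : src e ∈ S) :
      dst e ∈ neighbors src dst β S := mem_neighbors.2 ⟨e, he, hS, rfl⟩
  constructor
  · intro h
    have hH : HallCondition src dst (A.erase a) β := fun S hS => h S (hS.trans (erase_subset _ _))
    refine ⟨hH, ?_⟩
    by_contra! hc
    set S := tightCore src dst (A.erase a) β
    have hS : S ⊆ A.erase a := tightCore_subset _ _
    have hsub : neighbors src dst β (insert a S) ⊆ neighbors src dst β S := by
      intro x hx
      obtain ⟨e, he, hes, rfl⟩ := mem_neighbors.1 hx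
      exact (mem_insert.1 hes).elim (hc e he) (hmem he)
    have hle := (h _ (insert_subset ha (hS.trans (erase_subset _ _)))).trans (card_le_card hsub)
    have htight : #(neighbors src dst β S) = #S := hH.card_neighbors_tightCore
    rw [card_insert_of_notMem fun h => notMem_erase a A (hS h)] at hle
    omega
  · rintro ⟨hH, e, he, rfl, hed⟩ S hS
    by_cases heS : src e ∈ S
    · have hTA : S.erase (src e) ⊆ A.erase (src e) := erase_subset_erase _ hS
      have hsub : neighbors src dst β (S.erase (src e)) ⊆ neighbors src dst β S :=
        neighbors_mono subset_rfl (erase_subset _ _)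
      rw [← card_erase_add_one heS, Nat.add_one_le_iff]
      refine ((hH _ hTA).trans (card_le_card hsub)).lt_of_ne fun heq => ?_
      have hN := eq_of_subset_of_card_le hsub (heq ▸ hH _ hTA)
      refine hed (neighbors_mono subset_rfl (subset_tightCore hTA (by rw [hN, ← heq])) ?_)
      exact hN ▸ hmem he heS
    · exact hH S (subset_erase.2 ⟨hS, heS⟩)

end Hall

section HallVanishing

variable {F} {α π : Type*} {src : W → α} {dst : W → π} {A S : Finset α} {b₁ b₂ : ℕ}

theorem stablyVanishesAbove_tightCore_eq (hS : S ⊆ A)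
    (hH : ∀ E, StablyVanishesAbove F E {β | HallCondition src dst S β} b₁)
    (hP : ∀ E, StablyVanishesAbove F E {β | PositiveSurplus src dst (A \ S) β} b₂)
    (p : Finset π) (E : Finset W) :
    StablyVanishesAbove F E {β | HallCondition src dst A β ∧ tightCore src dst A β = S ∧
      neighbors src dst β S = p} (b₁ + b₂) := by
  simp only [hallCondition_and_tightCore_eq_iff hS]
  by_cases hcard : #p = #S
  swap
  · exact .of_isEmpty (fun _ _ h => hcard h.1) _
  set E₁ : Finset W := {e ∈ E | src e ∈ S ∧ dst e ∈ p} with hE₁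
  set E₂ : Finset W := {e ∈ E | src e ∈ A \ S ∧ dst e ∉ p} with hE₂
  set E₃ : Finset W := {e ∈ E | src e ∈ S ∧ dst e ∉ p} with hE₃
  have hdisj₂₃ : Disjoint E₂ E₃ := disjoint_filter.2 fun e _ h h' => (mem_sdiff.1 h.1).2 h'.1
  have hdisj₁₂ : Disjoint E₁ E₂ := disjoint_filter.2 fun e _ h h' => h'.2 h.2
  have hdisj₁₃ : Disjoint E₁ E₃ := disjoint_filter.2 fun e _ h h' => h'.2 h.2
  refine (StablyVanishesAbove.prod₃ (filter_subset _ E) (filter_subset _ E) (filter_subset _ E)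
    hdisj₁₂ hdisj₁₃ hdisj₂₃ ordConnected_hallCondition ordConnected_positiveSurplus (hH E₁) (hP E₂)
    (.singleton_empty E₃)).congr fun β hβ => ?_
  have hsub : β ∩ E₃ = ∅ ↔ neighbors src dst β S ⊆ p := by
    simp only [eq_empty_iff_forall_notMem, mem_inter, hE₃, mem_filter, subset_iff, mem_neighbors]
    exact ⟨fun h x ⟨e, he, hes, hx⟩ => by_contra fun hxp => h e ⟨he, hβ he, hes, hx ▸ hxp⟩,
      fun h e he => he.2.2.2 (h ⟨e, he.1, he.2.2.1, rfl⟩)⟩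
  have hSurplus : PositiveSurplus src dst (A \ S) (β ∩ E₂) ↔
      PositiveSurplus src dst (A \ S) {e ∈ β | dst e ∉ p} :=
    positiveSurplus_congr fun e he => by
      simp only [mem_inter, hE₂, mem_filter]
      exact ⟨fun h => ⟨h.1, h.2.2.2⟩, fun h => ⟨h.1, hβ h.1, he, h.2⟩⟩
  have hHall (h : neighbors src dst β S ⊆ p) :
      HallCondition src dst S (β ∩ E₁) ↔ HallCondition src dst S β :=
    hallCondition_congr fun e he => by
      simp only [mem_inter, hE₁, mem_filter]
      exact ⟨fun h => h.1, fun heβ => ⟨heβ, hβ heβ, he, h (mem_neighbors.2 ⟨e, heβ, he, rfl⟩)⟩⟩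
  exact ⟨fun ⟨h₁, h₂, h₃⟩ => ⟨hcard, hsub.1 h₃, (hHall (hsub.1 h₃)).1 h₁, hSurplus.1 h₂⟩,
    fun ⟨_, h₃, h₁, h₂⟩ => ⟨(hHall h₃).2 h₁, hSurplus.2 h₂, hsub.2 h₃⟩⟩

theorem stablyVanishesAbove_of_tightCore_fibers {P : Set (Finset W)} {b : ℕ} {E : Finset W}
    (hP : P.OrdConnected) (hPH : ∀ β ∈ P, HallCondition src dst A β)
    (h : ∀ S ⊆ A, ∀ p, StablyVanishesAbove F E
      {β ∈ P | tightCore src dst A β = S ∧ neighbors src dst β S = p} b) :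
    StablyVanishesAbove F E P b := by
  refine .of_fibers hP (monotoneOn_tightData.mono hPH) (OrderDual.rec fun ⟨S, p⟩ => ?_)
  simp only [tightData_eq_iff]
  by_cases hS : S ⊆ A
  · exact h S hS p
  · refine .of_isEmpty ?_ b
    rintro β - ⟨-, hcore, -⟩
    exact hS (hcore ▸ tightCore_subset A β)

theorem stablyVanishesAbove_hallCondition_of_erase {a : α} (ha : a ∈ A)
    (hH : ∀ S ⊆ A.erase a, ∀ E,
      StablyVanishesAbove F E {β | HallCondition src dst S β} (2 * #S - 1))
    (hP : ∀ S ⊆ A.erase a, ∀ E,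
      StablyVanishesAbove F E {β | PositiveSurplus src dst S β} (2 * #S)) (E : Finset W) :
    StablyVanishesAbove F E {β | HallCondition src dst A β} (2 * #A - 1) := by
  have hcard := card_erase_add_one ha
  refine stablyVanishesAbove_of_tightCore_fibers (A := A.erase a) ordConnected_hallCondition
    (fun β hβ => ((hallCondition_iff_of_mem ha).1 hβ).1) fun S hS p => ?_
  have hsum := card_sdiff_add_card_eq_card hS
  have hdisj : Disjoint ({e ∈ E | src e ∈ A.erase a} : Finset W) {e ∈ E | src e = a ∧ dst e ∉ p} :=
    disjoint_filter.2 fun e _ h h' => ne_of_mem_erase h h'.1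
  refine ((StablyVanishesAbove.prod (filter_subset _ E) (filter_subset _ E) hdisj ?_
    (stablyVanishesAbove_tightCore_eq hS (hH S hS) (hP _ sdiff_subset) p _)
    (.sep_nonempty _)).mono ?_).congr fun β hβ => ?_
  · simp only [← tightData_eq_iff]
    exact ordConnected_sep_eq ordConnected_hallCondition monotoneOn_tightData _
  · omega
  · have hmem (e : W) (he : src e ∈ A.erase a) :
        e ∈ β ∩ ({e ∈ E | src e ∈ A.erase a} : Finset W) ↔ e ∈ β := by
      rw [mem_inter, mem_filter]
      exact ⟨fun h => h.1, fun h => ⟨h, hβ h, he⟩⟩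
    have hedge : tightCore src dst (A.erase a) β = S ∧ neighbors src dst β S = p →
        ((β ∩ ({e ∈ E | src e = a ∧ dst e ∉ p} : Finset W)).Nonempty ↔ ∃ e ∈ β,
          src e = a ∧ dst e ∉ neighbors src dst β (tightCore src dst (A.erase a) β)) := by
      rintro ⟨rfl, rfl⟩
      simp only [Finset.Nonempty, mem_inter, mem_filter]
      exact ⟨fun ⟨e, heβ, _, he⟩ => ⟨e, heβ, he⟩, fun ⟨e, heβ, he⟩ => ⟨e, heβ, hβ heβ, he⟩⟩
    simp only [Set.mem_ofPred_eq, hallCondition_iff_of_mem ha, hallCondition_congr hmem,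
      tightCore_congr hmem, neighbors_congr fun e he => hmem e (hS he)]
    exact ⟨fun ⟨⟨hH, hc⟩, he⟩ => ⟨⟨hH, (hedge hc).1 he⟩, hc⟩,
      fun ⟨⟨hH, he⟩, hc⟩ => ⟨⟨hH, hc⟩, (hedge hc).2 he⟩⟩

theorem stablyVanishesAbove_positiveSurplus_of_sdiff (hA : A.Nonempty)
    (hH : ∀ S ⊆ A, ∀ E, StablyVanishesAbove F E {β | HallCondition src dst S β} (2 * #S - 1))
    (hP : ∀ S ⊂ A, ∀ E, StablyVanishesAbove F E {β | PositiveSurplus src dst S β} (2 * #S))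
    (E : Finset W) :
    StablyVanishesAbove F E {β | PositiveSurplus src dst A β} (2 * #A) := by
  have hcard : 2 * #A - 1 + 1 = 2 * #A := by have := hA.card_pos; omega
  have hmono : MonotoneOn (PositiveSurplus src dst A) {β | HallCondition src dst A β} :=
    fun β _ γ _ hle h => h.mono hle
  rw [← hcard]
  refine (StablyVanishesAbove.sep_of_monotoneOn ordConnected_hallCondition hmono
    ((hH A subset_rfl E).mono (by omega)) ?_).congr
      fun β _ => ⟨And.right, fun h => ⟨h.hallCondition, h⟩⟩
  refine stablyVanishesAbove_of_tightCore_fibers (A := A) ?_ (fun β hβ => hβ.1) fun S hS p => ?_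
  · exact Set.ordConnected_def.2 fun β hβ γ hγ δ hδ =>
      ⟨hβ.1.mono hδ.1, fun h => hγ.2 (h.mono hδ.2)⟩
  rcases S.eq_empty_or_nonempty with rfl | hne
  · exact .of_isEmpty (fun β _ hβ => hβ.1.2 (hβ.1.1.positiveSurplus_iff.2 hβ.2.1)) _
  have hsum := card_sdiff_add_card_eq_card hS
  have hpos := hne.card_pos
  refine ((stablyVanishesAbove_tightCore_eq hS (hH S hS)
    (hP _ (sdiff_ssubset hS hne)) p E).mono (by omega)).congr fun β _ => ?_
  refine ⟨fun ⟨hβ, hcore⟩ => ⟨⟨hβ, fun h => ?_⟩, hcore⟩, fun ⟨hβ, hcore⟩ => ⟨hβ.1, hcore⟩⟩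
  exact hne.ne_empty (hcore.1.symm.trans (hβ.positiveSurplus_iff.1 h))

theorem stablyVanishesAbove_hallCondition_and_positiveSurplus (src : W → α) (dst : W → π)
    (A : Finset α) (E : Finset W) :
    StablyVanishesAbove F E {β | HallCondition src dst A β} (2 * #A - 1) ∧
      StablyVanishesAbove F E {β | PositiveSurplus src dst A β} (2 * #A) := by
  induction A using Finset.strongInduction generalizing E with
  | H A ih =>
    rcases A.eq_empty_or_nonempty with rfl | hA
    · exact ⟨(StablyVanishesAbove.univ E).congr fun β _ => by simp [HallCondition],
        (StablyVanishesAbove.univ E).congr fun β _ => by simp [PositiveSurplus]⟩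
    obtain ⟨a, ha⟩ := hA
    have hsub (S : Finset α) (hS : S ⊆ A.erase a) : S ⊂ A := hS.trans_ssubset (erase_ssubset ha)
    have hH := stablyVanishesAbove_hallCondition_of_erase (F := F) ha
      (fun S hS E => (ih S (hsub S hS) E).1) fun S hS E => (ih S (hsub S hS) E).2
    refine ⟨hH E, stablyVanishesAbove_positiveSurplus_of_sdiff ⟨a, ha⟩ (fun S hS E => ?_)
      (fun S hS E => (ih S hS E).2) E⟩
    rcases hS.eq_or_ssubset with rfl | hlt
    · exact hH E
    · exact (ih S hlt E).1

end HallVanishing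

section Matching

variable {V : Type} {s M M' N : Finset (Sym2 V)} {x y z v : V}

/-- The set of vertices covered by the edges of `M`. -/
noncomputable def covered (M : Finset (Sym2 V)) : Finset V :=
  M.biUnion Sym2.toFinset

theorem mem_covered : v ∈ covered M ↔ ∃ e ∈ M, v ∈ e := by
  simp [covered]

theorem covered_mono (h : M ⊆ N) : covered M ⊆ covered N :=
  biUnion_subset_biUnion_of_subset_left _ h

theorem left_mem_covered (h : s(x, y) ∈ M) : x ∈ covered M :=
  mem_covered.2 ⟨_, h, Sym2.mem_mk_left x y⟩

theorem right_mem_covered (h : s(x, y) ∈ M) : y ∈ covered M :=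
  mem_covered.2 ⟨_, h, Sym2.mem_mk_right x y⟩

theorem covered_union (M N : Finset (Sym2 V)) : covered (M ∪ N) = covered M ∪ covered N :=
  union_biUnion

theorem covered_insert (M : Finset (Sym2 V)) (x y : V) :
    covered (insert s(x, y) M) = insert x (insert y (covered M)) := by
  ext v
  simp [covered, or_assoc]

namespace IsMatching

theorem mono (h : IsMatching N) (hM : M ⊆ N) : IsMatching M :=
  ⟨fun e he => h.1 e (hM he), fun e he f hf => h.2 e (hM he) f (hM hf)⟩

theorem card_covered (h : IsMatching M) : #(covered M) = 2 * #M := by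
  rw [covered, card_biUnion, mul_comm]
  · exact sum_const_nat fun e he => Sym2.card_toFinset_of_not_isDiag e (h.1 e he)
  · intro e he f hf hne
    rw [Function.onFun, disjoint_left]
    simpa only [Sym2.mem_toFinset] using h.2 e he f hf hne

theorem exists_mem (h : IsMatching M) (hx : x ∈ covered M) : ∃ z, x ≠ z ∧ s(x, z) ∈ M := by
  obtain ⟨e, he, hxe⟩ := mem_covered.1 hx
  obtain ⟨z, rfl⟩ := Sym2.mem_iff_exists.1 hxe
  exact ⟨z, fun hxz => h.1 _ he (Sym2.mk_isDiag_iff.2 hxz), he⟩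

theorem union (hM : IsMatching M) (hN : IsMatching N) (h : Disjoint (covered M) (covered N)) :
    IsMatching (M ∪ N) := by
  have hdisj {e f : Sym2 V} (he : e ∈ M) (hf : f ∈ N) (v : V) (hve : v ∈ e) : v ∉ f := fun hvf =>
    disjoint_left.1 h (mem_covered.2 ⟨e, he, hve⟩) (mem_covered.2 ⟨f, hf, hvf⟩)
  refine ⟨fun e he => (mem_union.1 he).elim (hM.1 e) (hN.1 e), fun e he f hf hne v hve hvf => ?_⟩
  rcases mem_union.1 he with he | he <;> rcases mem_union.1 hf with hf | hf
  · exact hM.2 e he f hf hne v hve hvf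
  · exact hdisj he hf v hve hvf
  · exact hdisj hf he v hvf hve
  · exact hN.2 e he f hf hne v hve hvf

theorem insert (h : IsMatching M) (hxy : x ≠ y) (hx : x ∉ covered M) (hy : y ∉ covered M) :
    IsMatching (insert s(x, y) M) := by
  rw [insert_eq]
  refine union ⟨by simpa using hxy, by simp +contextual⟩ h ?_
  simpa [covered, disjoint_left] using And.intro hx hy

theorem covered_erase (h : IsMatching M) (hxy : s(x, y) ∈ M) :
    covered (M.erase s(x, y)) = covered M \ {x, y} := by
  ext v
  simp only [mem_covered, mem_erase, mem_sdiff, mem_insert, mem_singleton, ← Sym2.mem_iff]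
  constructor
  · rintro ⟨e, ⟨hne, he⟩, hve⟩
    exact ⟨⟨e, he, hve⟩, h.2 e he _ hxy hne v hve⟩
  · rintro ⟨⟨e, he, hve⟩, hv⟩
    exact ⟨e, ⟨fun heq => hv (heq ▸ hve), he⟩, hve⟩

open scoped symmDiff in
/-- Follow the alternating path of `M ∪ M'` that starts at `x`, and exchange `M` and `M'` along
it. The vertex `y` is its other end. -/
theorem exists_exchange (hM : IsMatching M) (hM' : IsMatching M') (hx : x ∈ covered M)
    (hx' : x ∉ covered M') :
    ∃ y ∈ covered M ∆ covered M', y ≠ x ∧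
      (SimpleGraph.fromEdgeSet (↑(M ∪ M') : Set (Sym2 V))).Reachable x y ∧
      (∃ N ⊆ M ∪ M', IsMatching N ∧ covered N = covered M ∆ {x, y}) ∧
      ∃ N' ⊆ M ∪ M', IsMatching N' ∧ covered N' = covered M' ∆ {x, y} := by
  induction hn : #M + #M' generalizing M M' x with
  | zero => simp_all [covered]
  | succ n ih =>
    obtain ⟨z, hxz, he⟩ := hM.exists_mem hx
    have hz := right_mem_covered he
    have hcov := hM.covered_erase he
    have hreach : (SimpleGraph.fromEdgeSet (↑(M ∪ M') : Set (Sym2 V))).Reachable x z :=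
      SimpleGraph.Adj.reachable ((SimpleGraph.fromEdgeSet_adj _).2
        ⟨mem_coe.2 (mem_union_left _ he), hxz⟩)
    by_cases hz' : z ∈ covered M'
    · have hsub : M' ∪ M.erase s(x, z) ⊆ M ∪ M' :=
        union_comm M M' ▸ union_subset_union subset_rfl (erase_subset _ _)
      obtain ⟨y, hy, hyz, hzy, ⟨N', hN's, hN', hN'c⟩, N, hNs, hN, hNc⟩ :=
        ih (M' := M.erase s(x, z)) hM' (hM.mono (erase_subset _ _)) hz' (by simp [hcov])
          (by have := card_erase_add_one he; omega)
      clear ih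
      rw [hcov] at hy hNc
      have hyx : y ≠ x := by rintro rfl; simp [mem_symmDiff, hx'] at hy
      refine ⟨y, ?_, hyx, hreach.trans (hzy.mono ?_), ⟨N, hNs.trans hsub, hN, ?_⟩,
        Insert.insert s(x, z) N',
        insert_subset (mem_union_left _ he) (hN's.trans hsub), hN'.insert hxz ?_ ?_, ?_⟩
      · grind [mem_symmDiff]
      · exact SimpleGraph.fromEdgeSet_mono (coe_subset.2 hsub)
      · grind [mem_symmDiff]
      · grind [mem_symmDiff]
      · grind [mem_symmDiff]
      · rw [covered_insert]; grind [mem_symmDiff]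
    · refine ⟨z, by simp [mem_symmDiff, hz, hz'], hxz.symm, hreach,
        ⟨M.erase s(x, z), (erase_subset _ _).trans subset_union_left,
          hM.mono (erase_subset _ _), ?_⟩,
        Insert.insert s(x, z) M', insert_subset (mem_union_left _ he) subset_union_right,
        hM'.insert hxz hx' hz', ?_⟩
      · rw [hcov]; grind [mem_symmDiff]
      · rw [covered_insert]; grind [mem_symmDiff]

end IsMatching

end Matching

section MaximumMatching

variable {V : Type} {s t M M' : Finset (Sym2 V)} {u v w x y z : V}

/-- `M` is a matching of `s` with the largest possible number of edges. -/
structure IsMaximumMatching (s M : Finset (Sym2 V)) : Prop where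
  subset : M ⊆ s
  isMatching : IsMatching M
  card_eq : #M = nu s

/-- The set `D(s)` of the Gallai–Edmonds decomposition: the vertices left uncovered by some maximum
matching of `s`. -/
def missable (s : Finset (Sym2 V)) : Set V :=
  {v | ∃ M, IsMaximumMatching s M ∧ v ∉ covered M}

/-- The vertices `x` and `y` are equal, or no maximum matching of `s` leaves both uncovered. By
Gallai's lemma this is an equivalence relation when every vertex is missable; its classes are then
the vertex sets of the components of `s`. -/
def Coupled (s : Finset (Sym2 V)) (x y : V) : Prop :=
  x = y ∨ ∀ M, IsMaximumMatching s M → x ∈ covered M ∨ y ∈ covered M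

theorem IsMatching.card_le_nu (h : IsMatching M) (hM : M ⊆ s) : #M ≤ nu s :=
  le_sup (f := card) (mem_filter.2 ⟨mem_powerset.2 hM, h⟩)

theorem exists_isMaximumMatching (s : Finset (Sym2 V)) : ∃ M, IsMaximumMatching s M := by
  have hempty : ∅ ∈ s.powerset.filter IsMatching :=
    mem_filter.2 ⟨empty_mem_powerset s, by simp, by simp⟩
  obtain ⟨M, hM, hcard⟩ := exists_mem_eq_sup _ ⟨∅, hempty⟩ card
  rw [mem_filter, mem_powerset] at hM
  exact ⟨M, hM.1, hM.2, hcard.symm⟩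

theorem nu_mono (h : s ⊆ t) : nu s ≤ nu t := by
  obtain ⟨M, hM⟩ := exists_isMaximumMatching s
  exact hM.card_eq ▸ hM.isMatching.card_le_nu (hM.subset.trans h)

theorem IsMaximumMatching.mono (hM : IsMaximumMatching s M) (h : s ⊆ t) (hn : nu s = nu t) :
    IsMaximumMatching t M :=
  ⟨hM.subset.trans h, hM.isMatching, hM.card_eq.trans hn⟩

theorem IsMatching.isMaximumMatching (h : IsMatching M) (hM : M ⊆ s) (hn : nu s ≤ #M) :
    IsMaximumMatching s M :=
  ⟨hM, h, (h.card_le_nu hM).antisymm hn⟩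

theorem missable_mono (h : s ⊆ t) (hn : nu s = nu t) : missable s ⊆ missable t :=
  fun _ ⟨M, hM, hv⟩ => ⟨M, hM.mono h hn, hv⟩

theorem IsMaximumMatching.mem_covered_of_notMem_missable (hM : IsMaximumMatching s M)
    (hv : v ∉ missable s) : v ∈ covered M :=
  by_contra fun h => hv ⟨M, hM, h⟩

theorem IsMaximumMatching.mem_covered_or_of_mem (hM : IsMaximumMatching s M) (hxy : s(x, y) ∈ s)
    (hne : x ≠ y) : x ∈ covered M ∨ y ∈ covered M := by
  by_contra! h
  have hle := (hM.isMatching.insert hne h.1 h.2).card_le_nu (insert_subset hxy hM.subset)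
  rw [card_insert_of_notMem fun hmem => h.1 (left_mem_covered hmem), hM.card_eq] at hle
  omega

theorem IsMaximumMatching.exists_exchange (hM' : IsMaximumMatching s M') (hM : IsMatching M)
    (hMs : M ⊆ s) (hx : x ∈ covered M) (hx' : x ∉ covered M') :
    ∃ y ∈ covered M', y ∉ covered M ∧
      (SimpleGraph.fromEdgeSet (s : Set (Sym2 V))).Reachable x y ∧
      (∃ N ⊆ s, IsMatching N ∧ #N = #M ∧ covered N = insert y ((covered M).erase x)) ∧
      ∃ N', IsMaximumMatching s N' ∧ covered N' = insert x ((covered M').erase y) := by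
  obtain ⟨y, hy, hyx, hxy, ⟨N, hNs, hN, hNc⟩, N', hNs', hN', hNc'⟩ :=
    hM.exists_exchange hM'.isMatching hx hx'
  have hsub := union_subset hMs hM'.subset
  have hcard := hM.card_covered
  have hcard' := hM'.isMatching.card_covered
  have hcardN := hN.card_covered
  have hcardN' := hN'.card_covered
  by_cases hyM' : y ∈ covered M'
  · have hyM : y ∉ covered M := by grind [mem_symmDiff]
    have hc : covered N = insert y ((covered M).erase x) := by grind [mem_symmDiff]
    have hc' : covered N' = insert x ((covered M').erase y) := by grind [mem_symmDiff]
    have hNM : #N = #M := by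
      rw [hc, card_insert_of_notMem (by simp [hyM]), card_erase_add_one hx] at hcardN
      omega
    have hNM' : #N' = #M' := by
      rw [hc', card_insert_of_notMem (by simp [hx']), card_erase_add_one hyM'] at hcardN'
      omega
    exact ⟨y, hyM', hyM, hxy.mono (SimpleGraph.fromEdgeSet_mono (coe_subset.2 hsub)),
      ⟨N, hNs.trans hsub, hN, hNM, hc⟩, N', ⟨hNs'.trans hsub, hN', hNM'.trans hM'.card_eq⟩, hc'⟩
  · have hc' : covered N' = insert x (insert y (covered M')) := by grind [mem_symmDiff]
    have hle := hN'.card_le_nu (hNs'.trans hsub)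
    rw [hc', card_insert_of_notMem (by simp [hyx.symm, hx']), card_insert_of_notMem hyM'] at hcardN'
    have := hM'.card_eq
    omega

namespace Coupled

theorem anti (hxy : Coupled t x y) (h : s ⊆ t) (hn : nu s = nu t) : Coupled s x y :=
  hxy.imp_right fun hM M hMs => hM M (hMs.mono h hn)

theorem symm (h : Coupled s x y) : Coupled s y x :=
  h.imp Eq.symm fun hM M hMs => (hM M hMs).symm

theorem eq_of_isMaximumMatching (h : Coupled s x y) (hM : IsMaximumMatching s M)
    (hx : x ∉ covered M) (hy : y ∉ covered M) : x = y :=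
  h.resolve_right fun hc => (hc M hM).elim hx hy

theorem trans (hxy : Coupled s x y) (hyz : Coupled s y z) (hy : y ∈ missable s) :
    Coupled s x z := by
  refine or_iff_not_imp_right.2 fun hc => ?_
  push Not at hc
  obtain ⟨M, hM, hx, hz⟩ := hc
  by_cases hyM : y ∈ covered M
  · obtain ⟨M', hM', hyM'⟩ := hy
    obtain ⟨w, -, hwM, -, ⟨N, hNs, hN, hNM, hNc⟩, -⟩ :=
      hM'.exists_exchange hM.isMatching hM.subset hyM hyM'
    have hNmax : IsMaximumMatching s N := ⟨hNs, hN, hNM.trans hM.card_eq⟩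
    have hyw : y ≠ w := fun h => hwM (h ▸ hyM)
    have huniq (v : V) (hv : v ∉ covered M) (hyv : Coupled s y v) : v = w := by
      by_contra hvw
      have hyv := hyv.eq_of_isMaximumMatching hNmax (by simp [hNc, hyw]) (by simp [hNc, hv, hvw])
      exact hv (hyv ▸ hyM)
    exact (huniq x hx hxy.symm).trans (huniq z hz hyz).symm
  · exact (hxy.eq_of_isMaximumMatching hM hx hyM).trans (hyz.eq_of_isMaximumMatching hM hyM hz)

theorem of_reachable (h : ∀ v, v ∈ missable s)
    (hxy : (SimpleGraph.fromEdgeSet (s : Set (Sym2 V))).Reachable x y) : Coupled s x y := by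
  obtain ⟨p⟩ := hxy
  induction p with
  | nil => exact .inl rfl
  | cons hadj _ ih =>
    obtain ⟨hmem, hne⟩ := (SimpleGraph.fromEdgeSet_adj _).1 hadj
    exact trans (.inr fun M hM => hM.mem_covered_or_of_mem (mem_coe.1 hmem) hne) ih (h _)

end Coupled

theorem coupled_eq_iff (h : ∀ v, v ∈ missable s) : Coupled s x = Coupled s y ↔ Coupled s x y := by
  refine ⟨fun heq => heq ▸ .inl rfl, fun hxy => ?_⟩
  ext z
  exact ⟨fun hxz => hxy.symm.trans hxz (h x), fun hyz => hxy.trans hyz (h y)⟩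

theorem IsMaximumMatching.exists_swap (hM : IsMaximumMatching s M) (h : ∀ v, v ∈ missable s)
    (hx : x ∈ covered M) : ∃ y ∉ covered M, Coupled s x y ∧
      ∃ N, IsMaximumMatching s N ∧ covered N = insert y ((covered M).erase x) := by
  obtain ⟨M', hM', hx'⟩ := h x
  obtain ⟨y, -, hy, hxy, ⟨N, hNs, hN, hNM, hNc⟩, -⟩ :=
    hM'.exists_exchange hM.isMatching hM.subset hx hx'
  exact ⟨y, hy, .of_reachable h hxy, N, ⟨hNs, hN, hNM.trans hM.card_eq⟩, hNc⟩

theorem IsMaximumMatching.exists_coupled_notMem_covered (hM : IsMaximumMatching s M)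
    (h : ∀ v, v ∈ missable s) (x : V) : ∃ y ∉ covered M, Coupled s x y := by
  by_cases hx : x ∈ covered M
  · obtain ⟨y, hy, hxy, -⟩ := hM.exists_swap h hx
    exact ⟨y, hy, hxy⟩
  · exact ⟨x, hx, .inl rfl⟩

theorem exists_isMaximumMatching_disjoint_covered (h : ∀ v, v ∈ missable s) {T : Finset V}
    (hT : (T : Set V).Pairwise fun x y => ¬ Coupled s x y) :
    ∃ M, IsMaximumMatching s M ∧ Disjoint T (covered M) := by
  induction T using Finset.induction_on with
  | empty =>
    obtain ⟨M, hM⟩ := exists_isMaximumMatching s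
    exact ⟨M, hM, disjoint_empty_left _⟩
  | insert x T _ ih =>
    obtain ⟨M, hM, hMT⟩ := ih (hT.mono (coe_subset.2 (subset_insert x T)))
    by_cases hx : x ∈ covered M
    · obtain ⟨y, hy, hxy, N, hN, hNc⟩ := hM.exists_swap h hx
      have hyx : y ≠ x := fun h => hy (h ▸ hx)
      have hyT : y ∉ T := fun h => hT (mem_coe.2 (mem_insert_self x T))
        (mem_coe.2 (mem_insert_of_mem h)) hyx.symm hxy
      refine ⟨N, hN, ?_⟩
      rw [hNc, disjoint_insert_left, disjoint_insert_right]
      exact ⟨by simp [hyx.symm], hyT, hMT.mono_right (erase_subset _ _)⟩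
    · exact ⟨M, hM, disjoint_insert_left.2 ⟨hx, hMT⟩⟩

theorem coupled_iff_of_subset (hst : s ⊆ t) (hn : nu s = nu t) (h : ∀ v, v ∈ missable s) :
    Coupled s x y ↔ Coupled t x y := by
  refine ⟨fun hxy => ?_, fun hxy => hxy.anti hst hn⟩
  have ht (v : V) : v ∈ missable t := missable_mono hst hn (h v)
  obtain ⟨M, hM⟩ := exists_isMaximumMatching s
  obtain ⟨u, hu, hxu⟩ := (hM.mono hst hn).exists_coupled_notMem_covered ht x
  obtain ⟨w, hw, hyw⟩ := (hM.mono hst hn).exists_coupled_notMem_covered ht y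
  have huw : Coupled s u w :=
    ((hxu.anti hst hn).symm.trans hxy (h x)).trans (hyw.anti hst hn) (h y)
  obtain rfl := huw.eq_of_isMaximumMatching hM hu hw
  exact hxu.trans hyw.symm (ht u)

end MaximumMatching

section InducedEdges

variable {V : Type} {s t M : Finset (Sym2 V)} {X Y : Set V} {u v w d : V}

/-- The edges of `s` with both endpoints in `X`. -/
noncomputable def inducedEdges (s : Finset (Sym2 V)) (X : Set V) : Finset (Sym2 V) :=
  {e ∈ s | ∀ v ∈ e, v ∈ X}

theorem mem_inducedEdges {e : Sym2 V} : e ∈ inducedEdges s X ↔ e ∈ s ∧ ∀ v ∈ e, v ∈ X :=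
  mem_filter

theorem mk_mem_inducedEdges : s(v, w) ∈ inducedEdges s X ↔ s(v, w) ∈ s ∧ v ∈ X ∧ w ∈ X := by
  simp [mem_inducedEdges]

theorem inducedEdges_subset (s : Finset (Sym2 V)) (X : Set V) : inducedEdges s X ⊆ s :=
  filter_subset _ _

theorem inducedEdges_inducedEdges (s : Finset (Sym2 V)) (X Y : Set V) :
    inducedEdges (inducedEdges s X) Y = inducedEdges s (X ∩ Y) := by
  ext e
  simp only [mem_inducedEdges, and_assoc, Set.mem_inter_iff, forall₂_and]

theorem inter_inducedEdges {_ : DecidableEq (Sym2 V)} (h : s ⊆ t) (X : Set V) :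
    s ∩ inducedEdges t X = inducedEdges s X := by
  ext e
  simp only [mem_inter, mem_inducedEdges]
  exact ⟨fun he => ⟨he.1, he.2.2⟩, fun he => ⟨he.1, h he.1, he.2⟩⟩

theorem mem_of_mem_covered_inducedEdges (hM : M ⊆ inducedEdges s X) (hv : v ∈ covered M) :
    v ∈ X := by
  obtain ⟨e, he, hve⟩ := mem_covered.1 hv
  exact (mem_inducedEdges.1 (hM he)).2 v hve

theorem subset_inducedEdges (hM : M ⊆ s) (hX : ∀ v ∈ covered M, v ∈ X) : M ⊆ inducedEdges s X :=
  fun e he => mem_inducedEdges.2 ⟨hM he, fun v hve => hX v (mem_covered.2 ⟨e, he, hve⟩)⟩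

theorem notMem_covered_of_subset_inducedEdges_compl (hM : M ⊆ inducedEdges s {v}ᶜ) :
    v ∉ covered M :=
  fun hv => mem_of_mem_covered_inducedEdges hM hv rfl

theorem subset_inducedEdges_compl (hM : M ⊆ s) (hv : v ∉ covered M) : M ⊆ inducedEdges s {v}ᶜ :=
  subset_inducedEdges hM fun _ hw hwv => hv (hwv ▸ hw)

theorem IsMatching.exists_subset_inducedEdges_compl (hM : IsMatching M) (hMs : M ⊆ s)
    (hu : u ∈ covered M) : ∃ w, u ≠ w ∧ s(u, w) ∈ M ∧
      ∃ N ⊆ inducedEdges s {u}ᶜ, IsMatching N ∧ #N + 1 = #M ∧ covered N = covered M \ {u, w} := by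
  obtain ⟨w, huw, he⟩ := hM.exists_mem hu
  have hc := hM.covered_erase he
  exact ⟨w, huw, he, M.erase s(u, w),
    subset_inducedEdges_compl ((erase_subset _ _).trans hMs) (by simp [hc]),
    hM.mono (erase_subset _ _), card_erase_add_one he, hc⟩

theorem nu_inducedEdges_compl_of_notMem_missable (hu : u ∉ missable s) :
    nu (inducedEdges s {u}ᶜ) + 1 = nu s := by
  obtain ⟨M, hM⟩ := exists_isMaximumMatching s
  obtain ⟨K, hK⟩ := exists_isMaximumMatching (inducedEdges s {u}ᶜ)
  obtain ⟨w, -, -, N, hNs, hN, hNM, -⟩ := hM.isMatching.exists_subset_inducedEdges_compl hM.subset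
    (hM.mem_covered_of_notMem_missable hu)
  have hle := hN.card_le_nu hNs
  have hlt : nu (inducedEdges s {u}ᶜ) < nu s := by
    refine (nu_mono (inducedEdges_subset s _)).lt_of_ne fun heq => ?_
    exact hu ⟨K, hK.mono (inducedEdges_subset s _) heq,
      notMem_covered_of_subset_inducedEdges_compl hK.subset⟩
  have := hM.card_eq
  omega

theorem mem_missable_of_card_add_one (hud : s(u, d) ∈ s) (hne : u ≠ d) (hvu : v ≠ u) (hvd : v ≠ d)
    (hM : IsMatching M) (hMs : M ⊆ s) (hcard : #M + 1 = nu s) (hu : u ∉ covered M)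
    (hd : d ∉ covered M) (hv : v ∉ covered M) : v ∈ missable s := by
  refine ⟨_, (hM.insert hne hu hd).isMaximumMatching (insert_subset hud hMs) ?_, ?_⟩
  · rw [card_insert_of_notMem fun h => hu (left_mem_covered h), hcard]
  · simp [covered_insert, hvu, hvd, hv]

theorem missable_inducedEdges_compl_subset (hu : u ∉ missable s) (hd : d ∈ missable s)
    (hud : s(u, d) ∈ s) : missable (inducedEdges s {u}ᶜ) ⊆ insert u (missable s) := by
  rintro v ⟨M, hM, hv⟩
  refine or_iff_not_imp_left.2 fun hvu => ?_
  by_cases hvd : v = d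
  · exact hvd ▸ hd
  have hne : u ≠ d := fun h => hu (h ▸ hd)
  have huM := notMem_covered_of_subset_inducedEdges_compl hM.subset
  have hMs := hM.subset.trans (inducedEdges_subset s _)
  have hcard : #M + 1 = nu s := hM.card_eq ▸ nu_inducedEdges_compl_of_notMem_missable hu
  by_cases hdM : d ∈ covered M
  · obtain ⟨M', hM', hdM'⟩ := hd
    obtain ⟨y, -, hyM, -, ⟨N, hNs, hN, hNM, hNc⟩, N', hN', hNc'⟩ :=
      hM'.exists_exchange hM.isMatching hMs hdM hdM'
    have hyd : y ≠ d := fun h => hyM (h ▸ hdM)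
    have hyN' : y ∉ covered N' := by simp [hNc', hyd]
    by_cases hvy : v = y
    · exact ⟨N', hN', hvy ▸ hyN'⟩
    have huy : u ≠ y := fun h => hyN' (h ▸ hN'.mem_covered_of_notMem_missable hu)
    exact mem_missable_of_card_add_one hud hne hvu hvd hN hNs (hNM ▸ hcard)
      (by simp [hNc, huy, huM]) (by simp [hNc, hyd.symm]) (by simp [hNc, hvy, hv])
  · exact mem_missable_of_card_add_one hud hne hvu hvd hM.isMatching hMs hcard huM hdM hv

/-- Gallai's stability lemma. -/
theorem missable_inducedEdges_compl (hu : u ∉ missable s) (hd : d ∈ missable s)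
    (hud : s(u, d) ∈ s) : missable (inducedEdges s {u}ᶜ) = insert u (missable s) := by
  refine (missable_inducedEdges_compl_subset hu hd hud).antisymm (Set.insert_subset ?_ ?_)
  · obtain ⟨K, hK⟩ := exists_isMaximumMatching (inducedEdges s {u}ᶜ)
    exact ⟨K, hK, notMem_covered_of_subset_inducedEdges_compl hK.subset⟩
  · rintro v ⟨M, hM, hv⟩
    obtain ⟨w, -, -, N, hNs, hN, hNM, hNc⟩ := hM.isMatching.exists_subset_inducedEdges_compl
      hM.subset (hM.mem_covered_of_notMem_missable hu)
    refine ⟨N, hN.isMaximumMatching hNs ?_, by simp [hNc, hv]⟩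
    have := nu_inducedEdges_compl_of_notMem_missable hu
    have := hM.card_eq
    omega

theorem nu_and_missable_inducedEdges_compl_finset {A : Finset V}
    (hA : ∀ u ∈ A, u ∉ missable s ∧ ∃ d ∈ missable s, s(u, d) ∈ s) :
    nu (inducedEdges s (↑A)ᶜ) + #A = nu s ∧ missable (inducedEdges s (↑A)ᶜ) = missable s ∪ ↑A := by
  induction A using Finset.induction_on with
  | empty =>
    have : inducedEdges s Set.univ = s := by simp [inducedEdges]
    simp [this]
  | insert u A hu ih =>
    obtain ⟨hnu, hmiss⟩ := ih fun v hv => hA v (mem_insert_of_mem hv)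
    obtain ⟨hus, d, hd, hud⟩ := hA u (mem_insert_self u A)
    have hdA : d ∉ A := fun h => (hA d (mem_insert_of_mem h)).1 hd
    have heq : inducedEdges s (↑(insert u A))ᶜ = inducedEdges (inducedEdges s (↑A)ᶜ) {u}ᶜ := by
      rw [inducedEdges_inducedEdges, coe_insert, ← Set.singleton_union, Set.compl_union,
        Set.inter_comm]
    have hus' : u ∉ missable (inducedEdges s (↑A)ᶜ) := by simp [hmiss, hus, hu]
    rw [heq, missable_inducedEdges_compl hus' (hmiss ▸ .inl hd)
      (mk_mem_inducedEdges.2 ⟨hud, hu, hdA⟩), hmiss, card_insert_of_notMem hu, coe_insert,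
      Set.union_insert]
    exact ⟨by have := nu_inducedEdges_compl_of_notMem_missable hus'; omega, rfl⟩

theorem nu_eq_and_mem_missable_iff {m : ℕ} :
    nu s = m ∧ v ∈ missable s ↔ nu (inducedEdges s {v}ᶜ) = m ∧
      ∀ w, s(v, w) ∈ s → v ≠ w → w ∉ missable (inducedEdges s {v}ᶜ) := by
  have hsub := inducedEdges_subset s {v}ᶜ
  constructor
  · rintro ⟨rfl, M, hM, hv⟩
    have hnu : nu (inducedEdges s {v}ᶜ) = nu s := (nu_mono hsub).antisymm <|
      hM.card_eq ▸ hM.isMatching.card_le_nu (subset_inducedEdges_compl hM.subset hv)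
    refine ⟨hnu, ?_⟩
    rintro w hvw hne ⟨N, hN, hw⟩
    exact ((hN.mono hsub hnu).mem_covered_or_of_mem hvw hne).elim
      (notMem_covered_of_subset_inducedEdges_compl hN.subset) hw
  · rintro ⟨rfl, h⟩
    obtain ⟨K, hK⟩ := exists_isMaximumMatching (inducedEdges s {v}ᶜ)
    have hvK := notMem_covered_of_subset_inducedEdges_compl hK.subset
    have hnu : nu s = nu (inducedEdges s {v}ᶜ) := by
      by_contra hne
      have hv : v ∉ missable s := fun ⟨M, hM, hv⟩ => hne <|
        (hM.card_eq ▸ hM.isMatching.card_le_nu (subset_inducedEdges_compl hM.subset hv)).antisymm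
          (nu_mono hsub)
      obtain ⟨M, hM⟩ := exists_isMaximumMatching s
      obtain ⟨w, hvw, he, N, hNs, hN, hNM, hNc⟩ := hM.isMatching.exists_subset_inducedEdges_compl
        hM.subset (hM.mem_covered_of_notMem_missable hv)
      refine h w (hM.subset he) hvw ⟨N, hN.isMaximumMatching hNs ?_, by simp [hNc]⟩
      have := nu_inducedEdges_compl_of_notMem_missable hv
      have := hM.card_eq
      omega
    exact ⟨hnu, K, hK.mono hsub hnu.symm, hvK⟩

end InducedEdges

section Selection

variable {ι α π : Type*} {src : ι → α} {dst : ι → π} {A : Finset α} {β : Finset ι}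

theorem HallCondition.exists_injective (h : HallCondition src dst A β) :
    ∃ f : A → ι, (∀ a, f a ∈ β ∧ src (f a) = a) ∧ Function.Injective (dst ∘ f) := by
  obtain ⟨g, hg, hgmem⟩ := (all_card_le_biUnion_card_iff_exists_injective
    fun a : A => neighbors src dst β {a.1}).1 fun S => by
      rw [← card_map (Function.Embedding.subtype _)]
      refine (h (S.map _) fun a ha => property_of_mem_map_subtype S ha).trans (card_le_card ?_)
      intro x hx
      obtain ⟨e, he, hes, rfl⟩ := mem_neighbors.1 hx
      obtain ⟨a, ha, hae⟩ := mem_map.1 hes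
      exact mem_biUnion.2 ⟨a, ha, mem_neighbors.2 ⟨e, he, mem_singleton.2 hae.symm, rfl⟩⟩
  choose f hfβ hfsrc hfdst using fun a => mem_neighbors.1 (hgmem a)
  exact ⟨f, fun a => ⟨hfβ a, mem_singleton.1 (hfsrc a)⟩, (funext hfdst : dst ∘ f = g) ▸ hg⟩

theorem PositiveSurplus.hallCondition_filter_ne (h : PositiveSurplus src dst A β) (p : π) :
    HallCondition src dst A {e ∈ β | dst e ≠ p} := by
  intro S hS
  rcases S.eq_empty_or_nonempty with rfl | hne
  · simp
  have hsub : neighbors src dst β S ⊆ insert p (neighbors src dst {e ∈ β | dst e ≠ p} S) := by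
    intro x hx
    obtain ⟨e, he, hes, rfl⟩ := mem_neighbors.1 hx
    exact mem_insert.2 <| or_iff_not_imp_left.2 fun hp =>
      mem_neighbors.2 ⟨e, mem_filter.2 ⟨he, hp⟩, hes, rfl⟩
  have := (h S hS hne).trans_le ((card_le_card hsub).trans (card_insert_le _ _))
  omega

end Selection

section GallaiEdmonds

variable {V : Type} {s M N : Finset (Sym2 V)} {X Y D : Set V} {A C : Finset V} {v w d : V}

theorem isMatching_image {κ : Type*} {T : Finset κ} {x y : κ → V} (hx : Set.InjOn x T)
    (hy : Set.InjOn y T) (hxy : ∀ i ∈ T, ∀ j ∈ T, x i ≠ y j) :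
    IsMatching (T.image fun i => s(x i, y i)) := by
  refine ⟨fun e he => ?_, fun e he f hf hne v hve hvf => hne ?_⟩
  · obtain ⟨i, hi, rfl⟩ := mem_image.1 he
    exact fun h => hxy i hi i hi (Sym2.mk_isDiag_iff.1 h)
  · obtain ⟨i, hi, rfl⟩ := mem_image.1 he
    obtain ⟨j, hj, rfl⟩ := mem_image.1 hf
    suffices i = j by rw [this]
    rcases Sym2.mem_iff.1 hve with rfl | rfl <;> rcases Sym2.mem_iff.1 hvf with h | h
    · exact hx hi hj h
    · exact (hxy i hi j hj h).elim
    · exact (hxy j hj i hi h.symm).elim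
    · exact hy hi hj h

theorem mem_covered_image {κ : Type*} {T : Finset κ} {x y : κ → V} :
    v ∈ covered (T.image fun i => s(x i, y i)) ↔ ∃ i ∈ T, v = x i ∨ v = y i := by
  simp [mem_covered]

theorem IsMatching.restrict (hM : IsMatching M) (X : Set V) :
    IsMatching (inducedEdges M X) :=
  hM.mono (inducedEdges_subset M X)

theorem inducedEdges_mono (h : M ⊆ s) (hXY : X ⊆ Y) : inducedEdges M X ⊆ inducedEdges s Y :=
  fun _ he => mem_inducedEdges.2 ⟨h (mem_inducedEdges.1 he).1,
    fun v hv => hXY ((mem_inducedEdges.1 he).2 v hv)⟩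

theorem inducedEdges_eq_self (h : M ⊆ inducedEdges s X) : inducedEdges M X = M :=
  filter_true_of_mem fun _ he => (mem_inducedEdges.1 (h he)).2

theorem IsMatching.card_le_card_inducedEdges_compl_add (hM : IsMatching M) (A : Finset V) :
    #M ≤ #(inducedEdges M (↑A)ᶜ) + #A := by
  have htouch (e : Sym2 V) : e ∈ M \ inducedEdges M (↑A)ᶜ → ∃ v ∈ A, v ∈ e := by
    simp only [mem_sdiff, mem_inducedEdges, not_and, Set.mem_compl_iff, mem_coe]
    rintro ⟨he, h⟩
    simpa [and_comm] using h he
  have hle : #(M \ inducedEdges M (↑A)ᶜ) ≤ #A :=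
    card_le_card_of_forall_subsingleton (fun e v => v ∈ e) htouch fun v _ e he f hf =>
      by_contra fun hne => hM.2 e (sdiff_subset he.1) f (sdiff_subset hf.1) hne v he.2 hf.2
  have := card_sdiff_add_card_eq_card (inducedEdges_subset M (↑A)ᶜ)
  omega

theorem IsMatching.exists_mem_notMem (hM : IsMatching M)
    (hcard : #(inducedEdges M (↑A)ᶜ) + #A ≤ #M) (hv : v ∈ A) :
    ∃ w ∉ A, s(v, w) ∈ M := by
  by_contra! h
  have hsub : inducedEdges M (↑(A.erase v))ᶜ ⊆ inducedEdges M (↑A)ᶜ := by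
    refine fun e he => ?_
    obtain ⟨heM, he⟩ := mem_inducedEdges.1 he
    refine mem_inducedEdges.2 ⟨heM, fun u hu huA => ?_⟩
    obtain rfl : u = v := by_contra fun huv => he u hu (mem_coe.2 (mem_erase.2 ⟨huv, huA⟩))
    obtain ⟨w, rfl⟩ := Sym2.mem_iff_exists.1 hu
    have hwA : w ∈ A := by_contra fun hw => h w hw heM
    refine he w (Sym2.mem_mk_right u w) (mem_coe.2 (mem_erase.2 ⟨fun hwu => ?_, hwA⟩))
    exact hM.1 _ heM (Sym2.mk_isDiag_iff.2 hwu.symm)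
  have := hM.card_le_card_inducedEdges_compl_add (A.erase v)
  have := card_le_card hsub
  have := card_erase_add_one hv
  omega

theorem nu_le_nu_inducedEdges_compl_add (s : Finset (Sym2 V)) (A : Finset V) :
    nu s ≤ nu (inducedEdges s (↑A)ᶜ) + #A := by
  obtain ⟨M, hM⟩ := exists_isMaximumMatching s
  rw [← hM.card_eq]
  exact (hM.isMatching.card_le_card_inducedEdges_compl_add A).trans <| Nat.add_le_add_right
    ((hM.isMatching.restrict _).card_le_nu (inducedEdges_mono hM.subset subset_rfl)) _

theorem card_inducedEdges_union_le (h : ∀ x ∈ X, ∀ y ∈ Y, s(x, y) ∉ s) (hM : M ⊆ s) :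
    #(inducedEdges M (X ∪ Y)) ≤ #(inducedEdges M X) + #(inducedEdges M Y) := by
  refine (card_le_card fun e he => ?_).trans (card_union_le _ _)
  induction e with
  | h v w =>
    obtain ⟨he, hv, hw⟩ := mk_mem_inducedEdges.1 he
    rcases hv with hv | hv <;> rcases hw with hw | hw
    · exact mem_union_left _ (mk_mem_inducedEdges.2 ⟨he, hv, hw⟩)
    · exact (h v hv w hw (hM he)).elim
    · exact (h w hw v hv (Sym2.eq_swap ▸ hM he)).elim
    · exact mem_union_right _ (mk_mem_inducedEdges.2 ⟨he, hv, hw⟩)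

theorem IsMatching.union_inducedEdges (hXY : Disjoint X Y) (hM : IsMatching M)
    (hMX : M ⊆ inducedEdges s X) (hN : IsMatching N) (hNY : N ⊆ inducedEdges s Y) :
    M ∪ N ⊆ inducedEdges s (X ∪ Y) ∧ IsMatching (M ∪ N) ∧ #(M ∪ N) = #M + #N := by
  have hdisj : Disjoint (covered M) (covered N) := disjoint_left.2 fun v hv hv' =>
    hXY.notMem_of_mem_left (mem_of_mem_covered_inducedEdges hMX hv)
      (mem_of_mem_covered_inducedEdges hNY hv')
  have hMN := hM.union hN hdisj
  have hcard := hMN.card_covered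
  rw [covered_union, card_union_of_disjoint hdisj, hM.card_covered, hN.card_covered] at hcard
  exact ⟨union_subset (hMX.trans (inducedEdges_mono subset_rfl Set.subset_union_left))
    (hNY.trans (inducedEdges_mono subset_rfl Set.subset_union_right)), hMN, by omega⟩

theorem nu_inducedEdges_union (hXY : Disjoint X Y) (h : ∀ x ∈ X, ∀ y ∈ Y, s(x, y) ∉ s) :
    nu (inducedEdges s (X ∪ Y)) = nu (inducedEdges s X) + nu (inducedEdges s Y) := by
  obtain ⟨M, hM⟩ := exists_isMaximumMatching (inducedEdges s X)
  obtain ⟨N, hN⟩ := exists_isMaximumMatching (inducedEdges s Y)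
  obtain ⟨K, hK⟩ := exists_isMaximumMatching (inducedEdges s (X ∪ Y))
  obtain ⟨hsub, hMN, hcard⟩ :=
    hM.isMatching.union_inducedEdges hXY hM.subset hN.isMatching hN.subset
  refine le_antisymm ?_ (hM.card_eq ▸ hN.card_eq ▸ hcard ▸ hMN.card_le_nu hsub)
  have hKs := hK.subset.trans (inducedEdges_subset s _)
  have hle := card_inducedEdges_union_le h hKs
  rw [inducedEdges_eq_self hK.subset, hK.card_eq] at hle
  exact hle.trans <| Nat.add_le_add
    ((hK.isMatching.restrict X).card_le_nu (inducedEdges_mono hKs subset_rfl))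
    ((hK.isMatching.restrict Y).card_le_nu (inducedEdges_mono hKs subset_rfl))

theorem IsMaximumMatching.restrict (hXY : Disjoint X Y) (h : ∀ x ∈ X, ∀ y ∈ Y, s(x, y) ∉ s)
    (hM : IsMaximumMatching (inducedEdges s (X ∪ Y)) M) :
    IsMaximumMatching (inducedEdges s X) (inducedEdges M X) := by
  have hMs := hM.subset.trans (inducedEdges_subset s _)
  have hle := card_inducedEdges_union_le h hMs
  rw [inducedEdges_eq_self hM.subset, hM.card_eq, nu_inducedEdges_union hXY h] at hle
  have hleY := (hM.isMatching.restrict Y).card_le_nu (inducedEdges_mono hMs subset_rfl)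
  exact (hM.isMatching.restrict X).isMaximumMatching (inducedEdges_mono hMs subset_rfl) (by omega)

theorem mem_missable_inducedEdges_union_iff (hXY : Disjoint X Y)
    (h : ∀ x ∈ X, ∀ y ∈ Y, s(x, y) ∉ s) (hv : v ∉ Y) :
    v ∈ missable (inducedEdges s (X ∪ Y)) ↔ v ∈ missable (inducedEdges s X) := by
  constructor
  · rintro ⟨M, hM, hvM⟩
    exact ⟨_, hM.restrict hXY h, fun hv => hvM (covered_mono (inducedEdges_subset M X) hv)⟩
  · rintro ⟨M, hM, hvM⟩
    obtain ⟨N, hN⟩ := exists_isMaximumMatching (inducedEdges s Y)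
    obtain ⟨hsub, hMN, hcard⟩ :=
      hM.isMatching.union_inducedEdges hXY hM.subset hN.isMatching hN.subset
    refine ⟨M ∪ N, hMN.isMaximumMatching hsub ?_, ?_⟩
    · rw [nu_inducedEdges_union hXY h, hcard, hM.card_eq, hN.card_eq]
    · rw [covered_union, notMem_union]
      exact ⟨hvM, fun hvN => hv (mem_of_mem_covered_inducedEdges hN.subset hvN)⟩

theorem mem_missable_inducedEdges_of_notMem (hv : v ∉ X) : v ∈ missable (inducedEdges s X) := by
  obtain ⟨M, hM⟩ := exists_isMaximumMatching (inducedEdges s X)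
  exact ⟨M, hM, fun hvM => hv (mem_of_mem_covered_inducedEdges hM.subset hvM)⟩

theorem two_mul_nu_inducedEdges_eq_card_iff :
    2 * nu (inducedEdges s (C : Set V)) = #C ↔
      ∀ c ∈ C, c ∉ missable (inducedEdges s (C : Set V)) := by
  have hle {M : Finset (Sym2 V)} (hM : IsMaximumMatching (inducedEdges s (C : Set V)) M) :
      covered M ⊆ C ∧ #(covered M) = 2 * nu (inducedEdges s (C : Set V)) :=
    ⟨fun v hv => mem_of_mem_covered_inducedEdges hM.subset hv,
      hM.card_eq ▸ hM.isMatching.card_covered⟩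
  constructor
  · rintro h c hc ⟨M, hM, hcM⟩
    obtain ⟨hsub, hcard⟩ := hle hM
    exact hcM (eq_of_subset_of_card_le hsub (hcard.trans h).ge ▸ hc)
  · intro h
    obtain ⟨M, hM⟩ := exists_isMaximumMatching (inducedEdges s (C : Set V))
    rw [← (hle hM).2, (hle hM).1.antisymm fun c hc => hM.mem_covered_of_notMem_missable (h c hc)]

end GallaiEdmonds

section GallaiEdmondsStructure

variable {V : Type} {s N : Finset (Sym2 V)} {X Y D : Set V} {A C : Finset V} {v w d : V}

/-- An endpoint of the edge `e` in `X`; it is arbitrary if `e` does not meet `X`. -/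
noncomputable def endpointIn (X : Set V) (e : Sym2 V) : V :=
  haveI : Nonempty V := ⟨e.out.1⟩
  Classical.epsilon fun v => v ∈ e ∧ v ∈ X

/-- The edges of `s` between `X` and `Y`. -/
noncomputable def cutEdges (s : Finset (Sym2 V)) (X Y : Set V) : Finset (Sym2 V) :=
  {e ∈ s | ∃ x ∈ X, ∃ y ∈ Y, e = s(x, y)}

/-- The set `A(s)` of the Gallai–Edmonds decomposition: the vertices outside `missable s` that are
adjacent to `missable s`. -/
def separator (s : Finset (Sym2 V)) : Set V :=
  {v | v ∉ missable s ∧ ∃ d ∈ missable s, s(v, d) ∈ s}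

/-- The conditions on a partition `D ∪ A ∪ C` of the vertices that make it the Gallai–Edmonds
decomposition of `s`. By Gallai's lemma the `Coupled` classes in `D` are the vertex sets of the
components of `inducedEdges s D`. -/
structure IsGallaiEdmonds (s : Finset (Sym2 V)) (D : Set V) (A C : Finset V) : Prop where
  notMem : ∀ d ∈ D, ∀ c ∈ C, s(d, c) ∉ s
  two_mul_nu : 2 * nu (inducedEdges s (C : Set V)) = #C
  mem_missable : ∀ v, v ∈ missable (inducedEdges s D)
  positiveSurplus : PositiveSurplus (endpointIn ↑A)
    (fun e => Coupled (inducedEdges s D) (endpointIn D e)) A (cutEdges s ↑A D)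

theorem endpointIn_mk_left (hv : v ∈ X) (hw : w ∉ X) : endpointIn X s(v, w) = v := by
  have : Nonempty V := ⟨v⟩
  obtain ⟨h, hX⟩ := Classical.epsilon_spec
    (p := fun u => u ∈ s(v, w) ∧ u ∈ X) ⟨v, Sym2.mem_mk_left v w, hv⟩
  exact (Sym2.mem_iff.1 h).resolve_right fun h => hw (h ▸ hX)

theorem endpointIn_mk_right (hv : v ∉ X) (hw : w ∈ X) : endpointIn X s(v, w) = w :=
  Sym2.eq_swap ▸ endpointIn_mk_left hw hv

theorem mem_cutEdges {e : Sym2 V} :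
    e ∈ cutEdges s X Y ↔ e ∈ s ∧ ∃ x ∈ X, ∃ y ∈ Y, e = s(x, y) :=
  mem_filter

theorem IsMatching.exists_union_star (hN : IsMatching N) (hNs : N ⊆ inducedEdges s (↑A)ᶜ)
    {y : A → V} (hy : Function.Injective y)
    (h : ∀ a, s(↑a, y a) ∈ s ∧ y a ∉ A ∧ y a ∉ covered N) :
    ∃ M ⊆ s, IsMatching M ∧ #M = #N + #A ∧
      ∀ v ∈ covered M, v ∈ A ∨ v ∈ covered N ∨ ∃ a, v = y a := by
  set K : Finset (Sym2 V) := univ.image fun a : A => s(↑a, y a) with hK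
  have hKm : IsMatching K := isMatching_image Subtype.val_injective.injOn hy.injOn
    fun a _ b _ hab => (h b).2.1 (hab ▸ a.2)
  have hcov (v : V) (hv : v ∈ covered K) : v ∈ A ∨ ∃ a, v = y a := by
    obtain ⟨a, -, rfl | rfl⟩ := mem_covered_image.1 hv
    exacts [.inl a.2, .inr ⟨a, rfl⟩]
  have hdisj : Disjoint (covered N) (covered K) := disjoint_left.2 fun v hvN hvK => by
    rcases hcov v hvK with hv | ⟨a, rfl⟩
    · exact mem_of_mem_covered_inducedEdges hNs hvN hv
    · exact (h a).2.2 hvN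
  refine ⟨N ∪ K, union_subset (hNs.trans (inducedEdges_subset s _)) ?_, hN.union hKm hdisj, ?_, ?_⟩
  · exact image_subset_iff.2 fun a _ => (h a).1
  · have hKcard : #K = #A := by
      rw [hK, card_image_of_injective, univ_eq_attach, card_attach]
      intro a b hab
      rcases Sym2.eq_iff.1 hab with ⟨h, -⟩ | ⟨h', -⟩
      · exact Subtype.ext h
      · exact ((h b).2.1 (h' ▸ a.2)).elim
    rw [card_union_of_disjoint, hKcard]
    refine disjoint_left.2 fun e heN heK => ?_
    obtain ⟨a, -, rfl⟩ := mem_image.1 heK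
    exact (h a).2.2 (right_mem_covered heN)
  · intro v hv
    rw [covered_union, mem_union] at hv
    exact hv.elim (fun hv => .inr (.inl hv)) fun hv => (hcov v hv).imp_right .inr

theorem exists_isMaximumMatching_and_star_of_subset_separator
    (hA : ∀ u ∈ A, u ∉ missable s ∧ ∃ d ∈ missable s, s(u, d) ∈ s) (hd : d ∈ missable s) :
    ∃ N, IsMaximumMatching (inducedEdges s (↑A)ᶜ) N ∧ d ∉ covered N ∧ ∃ y : V → V, Set.InjOn y A ∧
      ∀ a ∈ A, s(a, y a) ∈ s ∧ y a ∉ A ∧ y a ∉ covered N ∧ y a ≠ d := by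
  obtain ⟨M, hM, hdM⟩ := hd
  have hNs := inducedEdges_mono hM.subset (subset_refl ((A : Set V)ᶜ))
  have hNm := hM.isMatching.restrict (↑A)ᶜ
  have hle := hM.isMatching.card_le_card_inducedEdges_compl_add A
  have hnu := (nu_and_missable_inducedEdges_compl_finset hA).1
  have hcard := hNm.card_le_nu hNs
  have hMcard := hM.card_eq
  have hex (a : V) : ∃ w, a ∈ A → w ∉ A ∧ s(a, w) ∈ M := by
    by_cases ha : a ∈ A
    · obtain ⟨w, hw⟩ := hM.isMatching.exists_mem_notMem (by omega) ha
      exact ⟨w, fun _ => hw⟩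
    · exact ⟨a, fun h => (ha h).elim⟩
  choose y hy using hex
  have heq {a : V} {e : Sym2 V} (ha : a ∈ A) (he : e ∈ M) (hye : y a ∈ e) : e = s(a, y a) :=
    by_contra fun hne =>
      hM.isMatching.2 e he _ (hy a ha).2 hne _ hye (Sym2.mem_mk_right a (y a))
  refine ⟨_, hNm.isMaximumMatching hNs (by omega),
    fun h => hdM (covered_mono (inducedEdges_subset M _) h), y, fun a ha b hb hab => ?_,
    fun a ha => ⟨hM.subset (hy a ha).2, (hy a ha).1, fun hcov => ?_, fun hyd => ?_⟩⟩
  · have := heq ha (hy b hb).2 (hab ▸ Sym2.mem_mk_right b (y b))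
    rw [← hab] at this
    exact (Sym2.congr_left.1 this).symm
  · obtain ⟨e, he, hye⟩ := mem_covered.1 hcov
    obtain ⟨heM, he⟩ := mem_inducedEdges.1 he
    exact he a (heq ha heM hye ▸ Sym2.mem_mk_left a _) ha
  · exact hdM (hyd ▸ right_mem_covered (hy a ha).2)

theorem exists_isMaximumMatching_and_star_of_positiveSurplus (hAD : Disjoint D ↑A)
    (hD : ∀ v, v ∈ missable (inducedEdges s D))
    (h : PositiveSurplus (endpointIn ↑A) (fun e => Coupled (inducedEdges s D) (endpointIn D e)) A
      (cutEdges s ↑A D)) (d : V) :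
    ∃ N, IsMaximumMatching (inducedEdges s D) N ∧ d ∉ covered N ∧
      ∃ y : A → V, Function.Injective y ∧
        ∀ a, s(↑a, y a) ∈ s ∧ y a ∈ D ∧ y a ∉ covered N ∧ y a ≠ d := by
  obtain ⟨f, hf, hinj⟩ :=
    (h.hallCondition_filter_ne (Coupled (inducedEdges s D) d)).exists_injective
  have hedge (a : A) : ∃ y ∈ D, s(↑a, y) ∈ s ∧ endpointIn D (f a) = y := by
    obtain ⟨hfs, a', ha', y, hy, he⟩ := mem_cutEdges.1 (mem_filter.1 (hf a).1).1
    have ha := (hf a).2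
    rw [he, endpointIn_mk_left ha' (hAD.notMem_of_mem_left hy)] at ha
    exact ⟨y, hy, ha ▸ he ▸ hfs, by rw [he, endpointIn_mk_right (hAD.notMem_of_mem_right ha') hy]⟩
  choose y hyD hys hyf using hedge
  have hyinj (a b : A) (hab : Coupled (inducedEdges s D) (y a) (y b)) : a = b :=
    hinj (by simpa only [Function.comp_apply, hyf] using (coupled_eq_iff hD).2 hab)
  have hyd (a : A) : ¬ Coupled (inducedEdges s D) (y a) d := fun had =>
    (mem_filter.1 (hf a).1).2 (hyf a ▸ (coupled_eq_iff hD).2 had)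
  obtain ⟨N, hN, hdisj⟩ := exists_isMaximumMatching_disjoint_covered hD
    (T := insert d (univ.image y)) <| by
      simp only [coe_insert, coe_image, coe_univ, Set.image_univ]
      refine Set.pairwise_insert.2 ⟨?_, ?_⟩
      · rintro _ ⟨a, rfl⟩ _ ⟨b, rfl⟩ hne hab
        exact hne (congrArg y (hyinj a b hab))
      · rintro _ ⟨a, rfl⟩ -
        exact ⟨fun hda => hyd a hda.symm, hyd a⟩
  rw [disjoint_left] at hdisj
  exact ⟨N, hN, hdisj (mem_insert_self _ _), y, fun a b hab => hyinj a b (.inl hab),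
    fun a => ⟨hys a, hyD a, hdisj (mem_insert_of_mem (mem_image_of_mem y (mem_univ a))),
      fun had => hyd a (.inl had)⟩⟩

theorem nu_inducedEdges_compl (hAC : (↑A : Set V)ᶜ = D ∪ ↑C) (hDC : Disjoint D ↑C)
    (h : ∀ d ∈ D, ∀ c ∈ C, s(d, c) ∉ s) :
    nu (inducedEdges s (↑A)ᶜ) = nu (inducedEdges s D) + nu (inducedEdges s (C : Set V)) := by
  rw [hAC, nu_inducedEdges_union hDC h]

namespace IsGallaiEdmonds

theorem exists_isMatching (h : IsGallaiEdmonds s D A C) (hAC : (↑A : Set V)ᶜ = D ∪ ↑C)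
    (hDC : Disjoint D ↑C) (d : V) : ∃ M ⊆ s, IsMatching M ∧
      #M = nu (inducedEdges s (↑A)ᶜ) + #A ∧ (d ∈ D → d ∉ covered M) := by
  have hAD : Disjoint D ↑A := Set.subset_compl_iff_disjoint_right.1 (hAC ▸ Set.subset_union_left)
  obtain ⟨N, hN, hdN, y, hyinj, hy⟩ := exists_isMaximumMatching_and_star_of_positiveSurplus hAD
    h.mem_missable h.positiveSurplus d
  obtain ⟨K, hK⟩ := exists_isMaximumMatching (inducedEdges s (C : Set V))
  have hKC {v : V} (hv : v ∈ covered K) : v ∈ C := mem_of_mem_covered_inducedEdges hK.subset hv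
  have hDK {v : V} (hv : v ∈ D) : v ∉ covered K :=
    fun hvK => hDC.notMem_of_mem_left hv (hKC hvK)
  obtain ⟨hsub, hNK, hcard⟩ :=
    hN.isMatching.union_inducedEdges hDC hN.subset hK.isMatching hK.subset
  obtain ⟨M, hMs, hM, hMcard, hMcov⟩ := hNK.exists_union_star (hAC ▸ hsub) hyinj fun a => by
    rw [covered_union, notMem_union]
    exact ⟨(hy a).1, hAD.notMem_of_mem_left (hy a).2.1, (hy a).2.2.1, hDK (hy a).2.1⟩
  refine ⟨M, hMs, hM, ?_, fun hd hdM => ?_⟩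
  · rw [hMcard, hcard, hN.card_eq, hK.card_eq, nu_inducedEdges_compl hAC hDC h.notMem]
  · rcases hMcov d hdM with hdA | hdNK | ⟨a, rfl⟩
    · exact hAD.notMem_of_mem_left hd hdA
    · rw [covered_union, mem_union] at hdNK
      exact hdNK.elim hdN (hDK hd)
    · exact (hy a).2.2.2 rfl

theorem nu_eq (h : IsGallaiEdmonds s D A C) (hAC : (↑A : Set V)ᶜ = D ∪ ↑C)
    (hDC : Disjoint D ↑C) : nu s = nu (inducedEdges s (↑A)ᶜ) + #A := by
  refine (nu_le_nu_inducedEdges_compl_add s A).antisymm ?_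
  rcases A.eq_empty_or_nonempty with rfl | ⟨a, -⟩
  · exact nu_mono (inducedEdges_subset s _)
  · obtain ⟨M, hMs, hM, hcard, -⟩ := h.exists_isMatching hAC hDC a
    exact hcard ▸ hM.card_le_nu hMs

theorem missable_eq (h : IsGallaiEdmonds s D A C) (hAC : (↑A : Set V)ᶜ = D ∪ ↑C)
    (hDC : Disjoint D ↑C) : missable s = D := by
  refine Set.Subset.antisymm ?_ fun d hd => ?_
  · rintro v ⟨M, hM, hv⟩
    have hnu := h.nu_eq hAC hDC
    have hrestrict := hM.isMatching.restrict (↑A)ᶜ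
    have hsub := inducedEdges_mono hM.subset (subset_refl ((A : Set V)ᶜ))
    have hle := hM.isMatching.card_le_card_inducedEdges_compl_add A
    have hcard := hrestrict.card_le_nu hsub
    have hMcard := hM.card_eq
    have hvA : v ∉ A := fun hvA => by
      obtain ⟨w, -, hvw⟩ := hM.isMatching.exists_mem_notMem (by omega) hvA
      exact hv (left_mem_covered hvw)
    have hvr : v ∈ missable (inducedEdges s (↑A)ᶜ) :=
      ⟨_, hrestrict.isMaximumMatching hsub (by omega),
        fun hvM => hv (covered_mono (inducedEdges_subset M _) hvM)⟩
    by_contra hvD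
    rw [hAC, Set.union_comm, mem_missable_inducedEdges_union_iff hDC.symm
      (fun c hc d hd => Sym2.eq_swap ▸ h.notMem d hd c hc) hvD] at hvr
    have hvC : v ∈ (C : Set V) :=
      ((Set.ext_iff.1 hAC v).1 (mt mem_coe.1 hvA)).resolve_left hvD
    exact two_mul_nu_inducedEdges_eq_card_iff.1 h.two_mul_nu v hvC hvr
  · obtain ⟨M, hMs, hM, hcard, hdM⟩ := h.exists_isMatching hAC hDC d
    exact ⟨M, hM.isMaximumMatching hMs (by rw [h.nu_eq hAC hDC, hcard]), hdM hd⟩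

theorem separator_eq (h : IsGallaiEdmonds s D A C) (hAC : (↑A : Set V)ᶜ = D ∪ ↑C)
    (hDC : Disjoint D ↑C) : separator s = ↑A := by
  have hAD : Disjoint D ↑A := Set.subset_compl_iff_disjoint_right.1 (hAC ▸ Set.subset_union_left)
  ext v
  rw [separator, h.missable_eq hAC hDC]
  refine ⟨fun ⟨hvD, d, hd, hvd⟩ => by_contra fun hvA => ?_, fun hv => ?_⟩
  · exact h.notMem d hd v (((Set.ext_iff.1 hAC v).1 hvA).resolve_left hvD) (Sym2.eq_swap ▸ hvd)
  · obtain ⟨q, hq⟩ := card_pos.1 <| (Nat.zero_le _).trans_lt <|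
      h.positiveSurplus {v} (singleton_subset_iff.2 hv) (singleton_nonempty v)
    obtain ⟨e, he, hev, -⟩ := mem_neighbors.1 hq
    obtain ⟨hes, a, ha, d, hd, rfl⟩ := mem_cutEdges.1 he
    rw [endpointIn_mk_left ha (hAD.notMem_of_mem_left hd), mem_singleton] at hev
    exact ⟨hAD.notMem_of_mem_right hv, d, hd, hev ▸ hes⟩

end IsGallaiEdmonds

theorem mem_neighbors_cutEdges {π : Type*} {ρ : V → π} {S : Finset V} {a x : V}
    (hAD : Disjoint D ↑A) (hS : S ⊆ A) (ha : a ∈ S) (hx : x ∈ D) (hax : s(a, x) ∈ s) :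
    ρ x ∈ neighbors (endpointIn ↑A) (fun e => ρ (endpointIn D e)) (cutEdges s ↑A D) S := by
  have haA := mem_coe.2 (hS ha)
  refine mem_neighbors.2 ⟨s(a, x), mem_cutEdges.2 ⟨hax, a, haA, x, hx, rfl⟩, ?_, ?_⟩
  · rwa [endpointIn_mk_left haA (hAD.notMem_of_mem_left hx)]
  · rw [endpointIn_mk_right (hAD.notMem_of_mem_right haA) hx]

theorem IsMaximumMatching.injOn_coupled (hN : IsMaximumMatching s N) :
    Set.InjOn (Coupled s) {x | x ∉ covered N} := fun x hx y hy hxy =>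
  (hxy ▸ .inl rfl : Coupled s x y).eq_of_isMaximumMatching hN hx hy

theorem positiveSurplus_cutEdges_of_eq (hAC : (↑A : Set V)ᶜ = D ∪ ↑C) (hDC : Disjoint D ↑C)
    (hnotMem : ∀ d ∈ D, ∀ c ∈ C, s(d, c) ∉ s) (hD : missable s = D) (hA : separator s = ↑A) :
    PositiveSurplus (endpointIn ↑A) (fun e => Coupled (inducedEdges s D) (endpointIn D e)) A
      (cutEdges s ↑A D) := by
  have hAD : Disjoint D ↑A := Set.subset_compl_iff_disjoint_right.1 (hAC ▸ Set.subset_union_left)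
  have hsep (u : V) (hu : u ∈ A) : u ∉ missable s ∧ ∃ d ∈ missable s, s(u, d) ∈ s :=
    (hA ▸ mem_coe.2 hu : u ∈ separator s)
  have hr := (nu_and_missable_inducedEdges_compl_finset hsep).2
  rintro S hS ⟨a₀, ha₀⟩
  obtain ⟨-, d, hd, had⟩ := hsep a₀ (hS ha₀)
  obtain ⟨N, hN, hdN, y, hyinj, hy⟩ :=
    exists_isMaximumMatching_and_star_of_subset_separator hsep hd
  have hyD (a : V) (ha : a ∈ A) : y a ∈ D := by
    have : y a ∈ missable (inducedEdges s (↑A)ᶜ) := ⟨N, hN, (hy a ha).2.2.1⟩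
    rw [hr, hD] at this
    exact this.resolve_right (hy a ha).2.1
  rw [hAC] at hN
  have hcard : #(insert d (S.image y)) = #S + 1 := by
    rw [card_insert_of_notMem, card_image_of_injOn (hyinj.mono hS)]
    rw [mem_image]
    exact fun ⟨a, ha, had⟩ => (hy a (hS ha)).2.2.2 had
  rw [Nat.lt_iff_add_one_le, ← hcard]
  refine card_le_card_of_injOn (Coupled (inducedEdges s D)) (fun x hx => ?_)
    ((hN.restrict hDC hnotMem).injOn_coupled.mono fun x hx => ?_)
  · rcases mem_insert.1 hx with rfl | hx
    · exact mem_neighbors_cutEdges hAD hS ha₀ (hD ▸ hd) had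
    · obtain ⟨a, ha, rfl⟩ := mem_image.1 hx
      exact mem_neighbors_cutEdges hAD hS ha (hyD a (hS ha)) (hy a (hS ha)).1
  · refine fun hxN => ?_
    have hxN := covered_mono (inducedEdges_subset N D) hxN
    rcases mem_insert.1 hx with rfl | hx
    · exact hdN hxN
    · obtain ⟨a, ha, rfl⟩ := mem_image.1 hx
      exact (hy a (hS ha)).2.2.1 hxN

/-- The Gallai–Edmonds structure theorem. -/
theorem isGallaiEdmonds_iff (hAC : (↑A : Set V)ᶜ = D ∪ ↑C) (hDC : Disjoint D ↑C) :
    IsGallaiEdmonds s D A C ↔ missable s = D ∧ separator s = ↑A := by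
  refine ⟨fun h => ⟨h.missable_eq hAC hDC, h.separator_eq hAC hDC⟩, fun ⟨hD, hA⟩ => ?_⟩
  have hAC' {v : V} : v ∉ A ↔ v ∈ D ∨ v ∈ C := by
    simpa using Set.ext_iff.1 hAC v
  have hnotMem (d : V) (hd : d ∈ D) (c : V) (hc : c ∈ C) : s(d, c) ∉ s := fun he => by
    have hcA : c ∈ separator s :=
      ⟨hD ▸ hDC.notMem_of_mem_right hc, d, hD ▸ hd, Sym2.eq_swap ▸ he⟩
    exact hAC'.2 (.inr hc) (mem_coe.1 (hA ▸ hcA))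
  obtain ⟨-, hr⟩ := nu_and_missable_inducedEdges_compl_finset (s := s) (A := A) fun u hu =>
    (hA ▸ mem_coe.2 hu : u ∈ separator s)
  rw [hD, hAC] at hr
  refine ⟨hnotMem, two_mul_nu_inducedEdges_eq_card_iff.2 fun c hc hmiss => ?_, fun v => ?_,
    positiveSurplus_cutEdges_of_eq hAC hDC hnotMem hD hA⟩
  · have hcD : c ∉ D := hDC.notMem_of_mem_right hc
    rw [← mem_missable_inducedEdges_union_iff hDC.symm
      (fun c hc d hd => Sym2.eq_swap ▸ hnotMem d hd c hc) hcD, Set.union_comm, hr] at hmiss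
    exact hmiss.elim hcD (hAC'.2 (.inr hc))
  · by_cases hv : v ∈ D
    · rw [← mem_missable_inducedEdges_union_iff hDC hnotMem (hDC.notMem_of_mem_left hv), hr]
      exact .inl hv
    · exact mem_missable_inducedEdges_of_notMem hv

end GallaiEdmondsStructure

section InducedAndCutEdges

variable {V : Type} {s t : Finset (Sym2 V)} {X Y N : Set V} {v : V}

theorem inducedEdges_insert_of_notMem {_ : DecidableEq (Sym2 V)} {e : Sym2 V} (hv : v ∈ e)
    (hX : v ∉ X) (s : Finset (Sym2 V)) : inducedEdges (insert e s) X = inducedEdges s X := by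
  ext f
  simp only [mem_inducedEdges, mem_insert]
  exact ⟨fun hf => ⟨hf.1.resolve_left fun h => hX (hf.2 v (h ▸ hv)), hf.2⟩,
    fun hf => ⟨.inr hf.1, hf.2⟩⟩

theorem inducedEdges_inter_of_subset {_ : DecidableEq (Sym2 V)} (h : inducedEdges s X ⊆ t) :
    inducedEdges (s ∩ t) X = inducedEdges s X := by
  ext e
  simp only [mem_inducedEdges, mem_inter]
  exact ⟨fun he => ⟨he.1.1, he.2⟩, fun he => ⟨⟨he.1, h (mem_inducedEdges.2 he)⟩, he.2⟩⟩

theorem cutEdges_subset (s : Finset (Sym2 V)) (X Y : Set V) : cutEdges s X Y ⊆ s :=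
  filter_subset _ _

theorem cutEdges_mono (h : s ⊆ t) (X Y : Set V) : cutEdges s X Y ⊆ cutEdges t X Y :=
  filter_subset_filter _ h

theorem inter_cutEdges {_ : DecidableEq (Sym2 V)} (h : s ⊆ t) (X Y : Set V) :
    s ∩ cutEdges t X Y = cutEdges s X Y := by
  ext e
  simp only [mem_inter, mem_cutEdges]
  exact ⟨fun he => ⟨he.1, he.2.2⟩, fun he => ⟨he.1, h he.1, he.2⟩⟩

theorem cutEdges_inter_of_subset {_ : DecidableEq (Sym2 V)} (h : cutEdges s X Y ⊆ t) :
    cutEdges (s ∩ t) X Y = cutEdges s X Y := by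
  ext e
  simp only [mem_cutEdges, mem_inter]
  exact ⟨fun he => ⟨he.1.1, he.2⟩, fun he => ⟨⟨he.1, h (mem_cutEdges.2 he)⟩, he.2⟩⟩

theorem cutEdges_insert_of_forall_ne {_ : DecidableEq (Sym2 V)} {e : Sym2 V}
    (h : ∀ x ∈ X, ∀ y ∈ Y, e ≠ s(x, y)) : cutEdges (insert e s) X Y = cutEdges s X Y := by
  ext f
  simp only [mem_cutEdges, mem_insert]
  refine ⟨?_, fun hf => ⟨.inr hf.1, hf.2⟩⟩
  rintro ⟨rfl | hf, x, hx, y, hy, hxy⟩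
  · exact (h x hx y hy hxy).elim
  · exact ⟨hf, x, hx, y, hy, hxy⟩

theorem cutEdges_singleton_univ (h : {w | s(v, w) ∈ s} ⊆ Y) :
    cutEdges s {v} Set.univ = cutEdges s {v} Y := by
  refine filter_congr fun e he => ?_
  simp only [Set.mem_singleton_iff, exists_eq_left, Set.mem_univ, true_and]
  refine exists_congr fun w => (and_iff_right_of_imp fun hw => h ?_).symm
  exact Set.mem_ofPred_eq ▸ hw ▸ he

theorem disjoint_inducedEdges_cutEdges (h : Disjoint X Y ∨ Disjoint X N) (s : Finset (Sym2 V)) :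
    Disjoint (inducedEdges s X) (cutEdges s Y N) := by
  refine disjoint_left.2 fun e he he' => ?_
  obtain ⟨-, y, hy, z, hz, rfl⟩ := mem_cutEdges.1 he'
  have hX := (mem_inducedEdges.1 he).2
  rcases h with h | h
  · exact h.notMem_of_mem_left (hX y (Sym2.mem_mk_left y z)) hy
  · exact h.notMem_of_mem_left (hX z (Sym2.mem_mk_right y z)) hz

theorem disjoint_inducedEdges (h : Disjoint X Y) (s : Finset (Sym2 V)) :
    Disjoint (inducedEdges s X) (inducedEdges s Y) := by
  refine disjoint_left.2 fun e he he' => ?_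
  exact h.notMem_of_mem_left ((mem_inducedEdges.1 he).2 _ e.out_fst_mem)
    ((mem_inducedEdges.1 he').2 _ e.out_fst_mem)

theorem disjoint_cutEdges {Z : Set V} (h : Disjoint X (Y ∪ Z)) (s : Finset (Sym2 V)) :
    Disjoint (cutEdges s X N) (cutEdges s Y Z) := by
  refine disjoint_left.2 fun e he he' => ?_
  obtain ⟨-, x, hx, w, -, rfl⟩ := mem_cutEdges.1 he
  obtain ⟨-, y, hy, z, hz, hyz⟩ := mem_cutEdges.1 he'
  rcases Sym2.mem_iff.1 (hyz ▸ Sym2.mem_mk_left x w) with rfl | rfl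
  · exact h.notMem_of_mem_left hx (.inl hy)
  · exact h.notMem_of_mem_left hx (.inr hz)

theorem cutEdges_eq_empty_iff : cutEdges s X Y = ∅ ↔ ∀ x ∈ X, ∀ y ∈ Y, s(x, y) ∉ s := by
  simp only [eq_empty_iff_forall_notMem, mem_cutEdges]
  exact ⟨fun h x hx y hy he => h _ ⟨he, x, hx, y, hy, rfl⟩,
    fun h e ⟨he, x, hx, y, hy, hxy⟩ => h x hx y hy (hxy ▸ he)⟩

end InducedAndCutEdges

section MissableFamilies

variable {V : Type} {s t : Finset (Sym2 V)} {X Y : Set V} {v : V} {m n : ℕ}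

theorem nu_eq_zero_iff (hs : ∀ e ∈ s, ¬e.IsDiag) : nu s = 0 ↔ s = ∅ := by
  refine ⟨fun h => eq_empty_of_forall_notMem fun e he => ?_, ?_⟩
  · have hM : IsMatching {e} := by simp +contextual [IsMatching, hs e he]
    have := hM.card_le_nu (singleton_subset_iff.2 he)
    simp [h] at this
  · rintro rfl
    obtain ⟨M, hM⟩ := exists_isMaximumMatching (∅ : Finset (Sym2 V))
    rw [← hM.card_eq, subset_empty.1 hM.subset, card_empty]

theorem missable_eq_univ_of_nu_eq_zero (hs : nu s = 0) : missable s = Set.univ := by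
  refine Set.eq_univ_of_forall fun v => ?_
  obtain ⟨M, hM⟩ := exists_isMaximumMatching s
  obtain rfl := card_eq_zero.1 (hM.card_eq.trans hs)
  exact ⟨∅, hM, by simp [mem_covered]⟩

theorem two_mul_nu_inducedEdges_le_card (C : Finset V) : 2 * nu (inducedEdges s ↑C) ≤ #C := by
  obtain ⟨M, hM⟩ := exists_isMaximumMatching (inducedEdges s ↑C)
  rw [← hM.card_eq, ← hM.isMatching.card_covered]
  exact card_le_card fun v hv => mem_coe.1 (mem_of_mem_covered_inducedEdges hM.subset hv)

theorem ordConnected_nu_eq (m : ℕ) : {s : Finset (Sym2 V) | nu s = m}.OrdConnected := by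
  refine Set.ordConnected_def.2 fun s hs t ht r hr => le_antisymm ?_ ?_
  · exact (nu_mono hr.2).trans_eq ht
  · exact hs.ge.trans (nu_mono hr.1)

theorem monotoneOn_missable (m : ℕ) :
    MonotoneOn missable {s : Finset (Sym2 V) | nu s = m} :=
  fun _ hs _ ht hst => missable_mono hst (hs.trans ht.symm)

theorem ordConnected_subset_missable (m : ℕ) (N : Set V) :
    {s : Finset (Sym2 V) | nu s = m ∧ N ⊆ missable s}.OrdConnected := by
  refine Set.ordConnected_def.2 fun s hs t ht r hr => ?_
  have hrm := (ordConnected_nu_eq m).out hs.1 ht.1 hr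
  exact ⟨hrm, hs.2.trans (monotoneOn_missable m hs.1 hrm hr.1)⟩

variable {F} [LinearOrder (Sym2 V)] {E : Finset (Sym2 V)} {b : ℕ}

omit [LinearOrder (Sym2 V)] in
theorem cutEdges_missable_mono (hst : s ⊆ t) (hn : nu (inducedEdges s X) = nu (inducedEdges t X)) :
    cutEdges s Y (missable (inducedEdges s X)) ⊆ cutEdges t Y (missable (inducedEdges t X)) :=
  fun e he => by
    obtain ⟨hes, y, hy, w, hw, rfl⟩ := mem_cutEdges.1 he
    exact mem_cutEdges.2 ⟨hst hes, y, hy, w, missable_mono (inducedEdges_mono hst subset_rfl) hn hw,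
      rfl⟩

omit [LinearOrder (Sym2 V)] in
theorem ordConnected_star {Q : Set (Finset (Sym2 V))} (hQ : Q.OrdConnected) :
    {s | nu (inducedEdges s X) = n ∧
      cutEdges s Y (missable (inducedEdges s X)) ∈ Q}.OrdConnected := by
  refine Set.ordConnected_def.2 fun s hs t ht r hr => ?_
  have hrn := (ordConnected_nu_eq n).out hs.1 ht.1
    ⟨inducedEdges_mono hr.1 subset_rfl, inducedEdges_mono hr.2 subset_rfl⟩
  exact ⟨hrn, hQ.out hs.2 ht.2 ⟨cutEdges_missable_mono hr.1 (hs.1.trans hrn.symm),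
    cutEdges_missable_mono hr.2 (hrn.trans ht.1.symm)⟩⟩

theorem stablyVanishesAbove_star {Q : Set (Finset (Sym2 V))} {b' : ℕ} (hQ : Q.OrdConnected)
    (h : StablyVanishesAbove F (inducedEdges E {v}ᶜ)
      {s | nu s = n ∧ {w | s(v, w) ∈ E} ⊆ missable s} b)
    (h' : StablyVanishesAbove F (cutEdges E {v} Set.univ) Q b') :
    StablyVanishesAbove F E {s | nu (inducedEdges s {v}ᶜ) = n ∧
      cutEdges s {v} (missable (inducedEdges s {v}ᶜ)) ∈ Q} (b + b') := by
  refine .of_fibers (f := fun s => {w | s(v, w) ∈ E ∧ w ∈ missable (inducedEdges s {v}ᶜ)})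
    (ordConnected_star hQ) ?_ fun a => ?_
  · exact fun s hs t ht hst w hw => ⟨hw.1, missable_mono
      (inducedEdges_mono hst subset_rfl) (hs.1.trans ht.1.symm) hw.2⟩
  by_cases ha : ∃ w, s(v, w) ∈ E ∧ w ∉ a
  · obtain ⟨w, hw, hwa⟩ := ha
    refine .of_forall_insert_mem_iff hw (fun s _ => ?_) _
    have hv : v ∉ ({v}ᶜ : Set V) := fun h => h rfl
    simp only [Set.mem_ofPred_eq, inducedEdges_insert_of_notMem (Sym2.mem_mk_left v w) hv]
    refine and_congr_left fun hK => and_congr_right fun _ => ?_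
    rw [cutEdges_insert_of_forall_ne]
    rintro _ rfl x hx heq
    exact hwa (hK ▸ ⟨hw, Sym2.congr_right.1 heq ▸ hx⟩)
  · push Not at ha
    have hdisj := disjoint_inducedEdges_cutEdges (N := Set.univ)
      (.inl (disjoint_compl_left : Disjoint {v}ᶜ ({v} : Set V))) E
    by_cases haE : a ⊆ {w | s(v, w) ∈ E}
    · refine (StablyVanishesAbove.prod (inducedEdges_subset E {v}ᶜ) (cutEdges_subset E {v} Set.univ)
        hdisj (ordConnected_subset_missable n _) h h').congr fun s hs => ?_
      simp only [Set.mem_ofPred_eq, inter_inducedEdges hs, inter_cutEdges hs]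
      have hK : {w | s(v, w) ∈ E ∧ w ∈ missable (inducedEdges s {v}ᶜ)} = a ↔
          {w | s(v, w) ∈ E} ⊆ missable (inducedEdges s {v}ᶜ) := by
        refine ⟨fun h w hw => (h ▸ ha w hw).2, fun h => ?_⟩
        exact Set.ext fun w => ⟨fun hw => ha w hw.1, fun hw => ⟨haE hw, h (haE hw)⟩⟩
      rw [hK, and_assoc, and_assoc]
      refine and_congr_right fun _ => and_comm.trans (and_congr_left fun hN => ?_)
      rw [cutEdges_singleton_univ fun w hw => hN (hs hw)]
    · refine .of_isEmpty ?_ _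
      rintro s - ⟨-, rfl⟩
      exact haE fun w hw => hw.1

theorem stablyVanishesAbove_mem_missable (hE : ∀ e ∈ E, ¬ e.IsDiag)
    (h : StablyVanishesAbove F (inducedEdges E {v}ᶜ)
      {s | nu s = m ∧ {w | s(v, w) ∈ E} ⊆ missable s} b) :
    StablyVanishesAbove F E {s | nu s = m ∧ v ∈ missable s} b := by
  refine (stablyVanishesAbove_star Set.ordConnected_singleton h (.singleton_empty _)).congr
    fun s hs => ?_
  simp only [Set.mem_ofPred_eq, nu_eq_and_mem_missable_iff, Set.mem_singleton_iff,
    eq_empty_iff_forall_notMem, mem_cutEdges]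
  refine and_congr_right fun _ => ⟨fun h w hvw _ hw => h _ ⟨hvw, v, rfl, w, hw, rfl⟩, ?_⟩
  rintro h _ ⟨hvw, _, rfl, w, hw, rfl⟩
  exact h w hvw (fun heq => hE _ (hs hvw) heq) hw

omit [LinearOrder (Sym2 V)] in
theorem nu_eq_add_one_iff {C : Finset V} {c : ℕ} (hs : ∀ e ∈ s, ¬ e.IsDiag)
    (hsC : inducedEdges s ↑C = s) (hC : #C = 2 * (c + 1)) (hv : v ∈ C) :
    nu s = c + 1 ↔ nu (inducedEdges s {v}ᶜ) = c ∧
      (cutEdges s {v} (missable (inducedEdges s {v}ᶜ))).Nonempty := by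
  have hperfect := two_mul_nu_inducedEdges_eq_card_iff (s := s) (C := C)
  rw [hsC, hC] at hperfect
  have hiff := nu_eq_and_mem_missable_iff (s := s) (v := v) (m := c)
  constructor
  · intro hn
    have hvs := hperfect.1 (by omega) v hv
    have hc : nu (inducedEdges s {v}ᶜ) = c := by
      have := nu_inducedEdges_compl_of_notMem_missable hvs
      omega
    refine ⟨hc, nonempty_iff_ne_empty.2 fun hcut => ?_⟩
    refine hvs (hiff.2 ⟨hc, fun w hw _ hwm => ?_⟩).2
    exact eq_empty_iff_forall_notMem.1 hcut _ (mem_cutEdges.2 ⟨hw, v, rfl, w, hwm, rfl⟩)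
  · rintro ⟨hc, e, he⟩
    obtain ⟨hvw, x, hx, w, hw, rfl⟩ := mem_cutEdges.1 he
    obtain rfl : v = x := hx.symm
    have hle : 2 * nu s ≤ #C := by
      have := two_mul_nu_inducedEdges_le_card (s := s) C
      rwa [hsC] at this
    have hge := nu_mono (inducedEdges_subset s {v}ᶜ)
    have hne : nu s ≠ c := fun hn => by
      by_cases hvs : v ∈ missable s
      · exact (hiff.1 ⟨hn, hvs⟩).2 w hvw (fun h => hs _ hvw h) hw
      · have := nu_inducedEdges_compl_of_notMem_missable hvs
        omega
    omega

theorem stablyVanishesAbove_nu_eq_of_card_eq {C : Finset V} {c : ℕ} (hE : ∀ e ∈ E, ¬ e.IsDiag)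
    (hEC : ∀ e ∈ E, ∀ v ∈ e, v ∈ C) (hC : #C = 2 * (c + 1))
    (h : ∀ v ∈ C, StablyVanishesAbove F (inducedEdges E {v}ᶜ)
      {s | nu s = c ∧ {w | s(v, w) ∈ E} ⊆ missable s} b) :
    StablyVanishesAbove F E {s | nu s = c + 1} (b + 1) := by
  obtain ⟨v, hv⟩ := card_pos.1 (by omega : 0 < #C)
  refine (stablyVanishesAbove_star (Q := {s | s.Nonempty}) ?_ (h v hv) (.sep_nonempty _)).congr
    fun s hs => ?_
  · exact Set.ordConnected_def.2 fun s hs t _ r hr => Finset.Nonempty.mono hr.1 hs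
  · refine (nu_eq_add_one_iff (fun e he => hE e (hs he)) ?_ hC hv).symm
    exact filter_true_of_mem fun e he => hEC e (hs he)

end MissableFamilies

section GallaiEdmondsFamilies

variable {V : Type} {F} [LinearOrder (Sym2 V)] {s E : Finset (Sym2 V)} {D : Set V} {A C : Finset V}
  {c m n b b' : ℕ}

theorem stablyVanishesAbove_positiveSurplus_coupled (hAD : Disjoint D ↑A)
    (h : StablyVanishesAbove F (inducedEdges E D) {s | nu s = n ∧ ∀ v, v ∈ missable s} b) :
    StablyVanishesAbove F E
      {s | (nu (inducedEdges s D) = n ∧ ∀ v, v ∈ missable (inducedEdges s D)) ∧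
        PositiveSurplus (endpointIn ↑A) (fun e => Coupled (inducedEdges s D) (endpointIn D e)) A
          (cutEdges s ↑A D)} (b + 2 * #A) := by
  set R : Set (Finset (Sym2 V)) := {s | nu s = n ∧ ∀ v, v ∈ missable s} with hR
  have hRord : R.OrdConnected := by
    simpa [hR, Set.univ_subset_iff, Set.eq_univ_iff_forall] using
      ordConnected_subset_missable n (Set.univ : Set V)
  have hmono (s t : Finset (Sym2 V)) (hst : s ⊆ t) : inducedEdges s D ⊆ inducedEdges t D :=
    inducedEdges_mono hst subset_rfl
  have hcoupled (s) (hs : s ∈ R) (t) (ht : t ∈ R) (hst : s ⊆ t) : Coupled s = Coupled t :=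
    funext fun x => funext fun y =>
      propext (coupled_iff_of_subset hst (hs.1.trans ht.1.symm) hs.2)
  refine .of_fibers (f := fun s => Coupled (inducedEdges s D)) ?_
    (fun s hs t ht hst => (hcoupled _ hs.1 _ ht.1 (hmono s t hst)).le) fun ρ => ?_
  · refine Set.ordConnected_def.2 fun s hs t ht r hr => ?_
    have hrR := hRord.out hs.1 ht.1 ⟨hmono _ _ hr.1, hmono _ _ hr.2⟩
    refine ⟨hrR, ?_⟩
    rw [← hcoupled _ hs.1 _ hrR (hmono _ _ hr.1)]
    exact hs.2.mono (cutEdges_mono hr.1 ↑A D)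
  have hρ : StablyVanishesAbove F (inducedEdges E D) {s ∈ R | Coupled s = ρ} b :=
    h.sep_of_locallyConstant fun s hs t ht hst => by rw [hcoupled s hs t ht hst]
  have hρord : {s ∈ R | Coupled s = ρ}.OrdConnected :=
    ordConnected_sep_eq hRord (fun s hs t ht hst => (hcoupled s hs t ht hst).le) ρ
  refine (StablyVanishesAbove.prod (inducedEdges_subset E D) (cutEdges_subset E ↑A D)
    (disjoint_inducedEdges_cutEdges (.inl hAD) E) hρord hρ
    (stablyVanishesAbove_hallCondition_and_positiveSurplus (endpointIn ↑A)
      (fun e => ρ (endpointIn D e)) A _).2).congr fun s hs => ?_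
  rw [Set.mem_ofPred_eq, inter_inducedEdges hs, inter_cutEdges hs]
  constructor
  · rintro ⟨⟨hsR, rfl⟩, hsurplus⟩
    exact ⟨⟨hsR, hsurplus⟩, rfl⟩
  · rintro ⟨⟨hsR, hsurplus⟩, rfl⟩
    exact ⟨⟨hsR, rfl⟩, hsurplus⟩

theorem stablyVanishesAbove_isGallaiEdmonds (hDA : Disjoint D ↑A) (hDC : Disjoint D ↑C)
    (hAC : Disjoint (A : Set V) ↑C) (hcard : #C = 2 * c)
    (hC : StablyVanishesAbove F (inducedEdges E ↑C) {s | nu s = c} b)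
    (hD : StablyVanishesAbove F (inducedEdges E D) {s | nu s = n ∧ ∀ v, v ∈ missable s} b') :
    StablyVanishesAbove F E {s | nu (inducedEdges s D) = n ∧ IsGallaiEdmonds s D A C}
      (b + (b' + 2 * #A)) := by
  set T := inducedEdges E D ∪ cutEdges E ↑A D
  have hTE : T ⊆ E := union_subset (inducedEdges_subset E D) (cutEdges_subset E ↑A D)
  have hTD : inducedEdges T D = inducedEdges E D :=
    inter_eq_right.2 hTE ▸ inducedEdges_inter_of_subset subset_union_left
  have hCT : Disjoint (inducedEdges E ↑C) T := disjoint_union_right.2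
    ⟨disjoint_inducedEdges hDC.symm E, disjoint_inducedEdges_cutEdges (.inl hAC.symm) E⟩
  have hcutT : Disjoint (cutEdges E D ↑C) T := disjoint_union_right.2
    ⟨(disjoint_inducedEdges_cutEdges (.inr hDC) E).symm,
      (disjoint_cutEdges (Set.disjoint_union_right.2 ⟨hDA.symm, hAC⟩) E).symm⟩
  have hprod := StablyVanishesAbove.prod₃ (cutEdges_subset E D ↑C) (inducedEdges_subset E ↑C) hTE
    (disjoint_inducedEdges_cutEdges (.inl hDC.symm) E).symm hcutT hCT
    Set.ordConnected_singleton (ordConnected_nu_eq c) (.singleton_empty _) hC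
    (stablyVanishesAbove_positiveSurplus_coupled hDA (hTD.symm ▸ hD))
  rw [zero_add] at hprod
  refine hprod.congr fun s hs => ?_
  have hDT : inducedEdges s D ⊆ T := (inducedEdges_mono hs subset_rfl).trans subset_union_left
  have hAT : cutEdges s ↑A D ⊆ T := (cutEdges_mono hs _ _).trans subset_union_right
  simp only [Set.mem_ofPred_eq, Set.mem_singleton_iff, inter_cutEdges hs, cutEdges_eq_empty_iff,
    inter_inducedEdges hs, inducedEdges_inter_of_subset hDT,
    cutEdges_inter_of_subset hAT]
  constructor
  · rintro ⟨hnotMem, hnu, ⟨hn, hmissable⟩, hsurplus⟩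
    exact ⟨hn, hnotMem, by rw [hnu, hcard], hmissable, hsurplus⟩
  · rintro ⟨hn, h⟩
    have := h.two_mul_nu
    exact ⟨h.notMem, by omega, ⟨hn, h.mem_missable⟩, h.positiveSurplus⟩

theorem stablyVanishesAbove_nu_eq_of_two_mul_eq_card (hE : ∀ e ∈ E, ¬e.IsDiag)
    (hEC : ∀ e ∈ E, ∀ v ∈ e, v ∈ C) (hC : #C = 2 * c)
    (ih : ∀ n < c, ∀ E : Finset (Sym2 V), (∀ e ∈ E, ¬e.IsDiag) → ∀ N : Set V,
      StablyVanishesAbove F E {s | nu s = n ∧ N ⊆ missable s} (3 * n)) :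
    StablyVanishesAbove F E {s | nu s = c} (3 * c - 2) := by
  rcases c with _ | c
  · exact (StablyVanishesAbove.singleton_empty E).congr fun s hs =>
      (nu_eq_zero_iff fun e he => hE e (hs he)).symm
  · refine stablyVanishesAbove_nu_eq_of_card_eq hE hEC hC fun v _ => ?_
    exact ih c (Nat.lt_succ_self c) _ (fun e he => hE e (inducedEdges_subset E _ he)) _

theorem stablyVanishesAbove_missable_eq_and_separator_eq (hE : ∀ e ∈ E, ¬e.IsDiag)
    (ih : ∀ n < m, ∀ E : Finset (Sym2 V), (∀ e ∈ E, ¬e.IsDiag) → ∀ N : Set V,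
      StablyVanishesAbove F E {s | nu s = n ∧ N ⊆ missable s} (3 * n))
    (hAC : (↑A : Set V)ᶜ = D ∪ ↑C) (hDC : Disjoint D ↑C) (hD : D ≠ Set.univ) :
    StablyVanishesAbove F E {s | nu s = m ∧ missable s = D ∧ separator s = ↑A} (3 * m - 1) := by
  have hnu (s : Finset (Sym2 V)) (h : IsGallaiEdmonds s D A C) :
      nu s = nu (inducedEdges s D) + nu (inducedEdges s (C : Set V)) + #A := by
    rw [h.nu_eq hAC hDC, nu_inducedEdges_compl hAC hDC h.notMem]
  have hDA : Disjoint D ↑A := Set.subset_compl_iff_disjoint_right.1 (hAC ▸ Set.subset_union_left)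
  have hCA : Disjoint (C : Set V) ↑A :=
    Set.subset_compl_iff_disjoint_right.1 (hAC ▸ Set.subset_union_right)
  simp only [← isGallaiEdmonds_iff hAC hDC]
  by_cases hpar : ∃ c, #C = 2 * c ∧ c + #A ≤ m
  · obtain ⟨c, hc, hcm⟩ := hpar
    have hpos : 1 ≤ c + #A := by
      by_contra hzero
      have hC : C = ∅ := card_eq_zero.1 (by omega)
      have hA : A = ∅ := card_eq_zero.1 (by omega)
      simp [hA, hC, hD.symm] at hAC
    have hEC (X : Set V) (e) (he : e ∈ inducedEdges E X) : ¬e.IsDiag :=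
      hE e (inducedEdges_subset E X he)
    have hperfect := stablyVanishesAbove_nu_eq_of_two_mul_eq_card (F := F) (hEC ↑C)
      (fun e he => (mem_inducedEdges.1 he).2) hc fun n hn => ih n (by omega)
    have hmissable := (ih (m - c - #A) (by omega) _ (hEC D) Set.univ).congr
      (P' := {s | nu s = m - c - #A ∧ ∀ v, v ∈ missable s})
      fun s _ => by simp [Set.eq_univ_iff_forall]
    refine ((stablyVanishesAbove_isGallaiEdmonds hDA hDC hCA.symm hc hperfect hmissable).mono
      (by omega)).congr fun s _ => and_congr_left fun h => ?_
    have := hnu s h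
    have := h.two_mul_nu
    omega
  · refine .of_isEmpty ?_ _
    rintro s - ⟨hn, h⟩
    have := hnu s h
    exact hpar ⟨_, h.two_mul_nu.symm, by omega⟩

theorem stablyVanishesAbove_missable_eq (hE : ∀ e ∈ E, ¬e.IsDiag)
    (ih : ∀ n < m, ∀ E : Finset (Sym2 V), (∀ e ∈ E, ¬e.IsDiag) → ∀ N : Set V,
      StablyVanishesAbove F E {s | nu s = n ∧ N ⊆ missable s} (3 * n)) (hD : D ≠ Set.univ) :
    StablyVanishesAbove F E {s | nu s = m ∧ missable s = D} (3 * m - 1) := by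
  refine .of_fibers (f := separator) (ordConnected_sep_eq (ordConnected_nu_eq m)
    (monotoneOn_missable m) D) (fun s hs t ht hst v hv => ?_) fun A => ?_
  · obtain ⟨d, hd, hvd⟩ := hv.2
    exact ⟨ht.2 ▸ hs.2 ▸ hv.1, d, ht.2 ▸ hs.2 ▸ hd, hst hvd⟩
  by_cases hfin : (Dᶜ).Finite ∧ A ⊆ Dᶜ
  · obtain ⟨hD', hA⟩ := hfin
    lift A to Finset V using hD'.subset hA
    obtain ⟨C, hC⟩ := (hD'.sdiff (t := (A : Set V))).exists_finset_coe
    refine (stablyVanishesAbove_missable_eq_and_separator_eq (A := A) (C := C) hE ih ?_ ?_ hD).congr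
      fun s _ => and_assoc.symm
    · rw [hC]
      ext v
      have := @hA v
      simp only [Set.mem_compl_iff, Set.mem_union, Set.mem_sdiff] at this ⊢
      tauto
    · rw [hC]
      exact disjoint_compl_right.mono_right Set.sdiff_subset
  · refine .of_isEmpty ?_ _
    rintro s - ⟨⟨-, rfl⟩, rfl⟩
    obtain ⟨M, hM⟩ := exists_isMaximumMatching s
    exact hfin ⟨(covered M).finite_toSet.subset fun v hv => hM.mem_covered_of_notMem_missable hv,
      fun v hv => hv.1⟩

theorem stablyVanishesAbove_not_subset_missable (hE : ∀ e ∈ E, ¬e.IsDiag)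
    (ih : ∀ n < m, ∀ E : Finset (Sym2 V), (∀ e ∈ E, ¬e.IsDiag) → ∀ N : Set V,
      StablyVanishesAbove F E {s | nu s = n ∧ N ⊆ missable s} (3 * n)) (N : Set V) :
    StablyVanishesAbove F E {s | nu s = m ∧ ¬N ⊆ missable s} (3 * m - 1) := by
  refine .of_fibers (f := missable) ?_
    ((monotoneOn_missable m).mono fun s hs => hs.1) fun D => ?_
  · refine Set.ordConnected_def.2 fun s hs t ht r hr => ?_
    have hrm := (ordConnected_nu_eq m).out hs.1 ht.1 hr
    exact ⟨hrm, fun h => ht.2 (h.trans (monotoneOn_missable m hrm ht.1 hr.2))⟩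
  by_cases hN : N ⊆ D
  · refine .of_isEmpty ?_ _
    rintro s - ⟨⟨-, h⟩, rfl⟩
    exact h hN
  · have hD : D ≠ Set.univ := fun h => hN (h ▸ Set.subset_univ N)
    refine (stablyVanishesAbove_missable_eq hE ih hD).congr fun s _ => ?_
    exact ⟨fun h => ⟨⟨h.1, h.2 ▸ hN⟩, h.2⟩, fun h => ⟨h.1.1, h.2⟩⟩

theorem stablyVanishesAbove_nu_eq_of_pos (hm : 0 < m)
    (ih : ∀ n < m, ∀ E : Finset (Sym2 V), (∀ e ∈ E, ¬e.IsDiag) → ∀ N : Set V,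
      StablyVanishesAbove F E {s | nu s = n ∧ N ⊆ missable s} (3 * n)) :
    ∀ E : Finset (Sym2 V), (∀ e ∈ E, ¬e.IsDiag) →
      StablyVanishesAbove F E {s | nu s = m} (3 * m) ∧
      ∀ N : Set V, StablyVanishesAbove F E {s | nu s = m ∧ N ⊆ missable s} (3 * m) := by
  intro E
  induction E using Finset.strongInduction with
  | H E ihE =>
  intro hE
  have hmono (N : Set V) : MonotoneOn (fun s => N ⊆ missable s) {s | nu s = m} :=
    fun s hs t ht hst hN => hN.trans (monotoneOn_missable m hs ht hst)
  have hnot := stablyVanishesAbove_not_subset_missable hE ih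
  have hnu : StablyVanishesAbove F E {s | nu s = m} (3 * m) := by
    rcases E.eq_empty_or_nonempty with rfl | ⟨e, he⟩
    · refine .of_isEmpty (fun s hs hn => hm.ne ?_) _
      rw [← hn, eq_comm, nu_eq_zero_iff fun e he => hE e (hs he), subset_empty.1 hs]
    · have hlt : inducedEdges E {e.out.1}ᶜ ⊂ E := by
        refine (inducedEdges_subset E _).ssubset_of_mem_notMem he fun h => ?_
        exact (mem_inducedEdges.1 h).2 _ e.out_fst_mem rfl
      refine .glue (ordConnected_nu_eq m) (hmono {e.out.1}) ?_ ((hnot _).mono (Nat.sub_le _ _))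
      simp only [Set.singleton_subset_iff]
      exact stablyVanishesAbove_mem_missable hE
        ((ihE _ hlt fun f hf => hE f (hlt.subset hf)).2 _)
  refine ⟨hnu, fun N => ?_⟩
  obtain ⟨b, hb⟩ : ∃ b, 3 * m = b + 1 := ⟨3 * m - 1, by omega⟩
  have hnotN := hnot N
  rw [hb] at hnu hnotN ⊢
  exact hnu.sep_of_monotoneOn (ordConnected_nu_eq m) (hmono N) hnotN

theorem stablyVanishesAbove_subset_missable (m : ℕ) (E : Finset (Sym2 V))
    (hE : ∀ e ∈ E, ¬e.IsDiag) (N : Set V) :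
    StablyVanishesAbove F E {s | nu s = m ∧ N ⊆ missable s} (3 * m) := by
  induction m using Nat.strong_induction_on generalizing E N with
  | _ m ih =>
    rcases m.eq_zero_or_pos with rfl | hm
    · refine (StablyVanishesAbove.singleton_empty E).congr fun s hs => ?_
      rw [Set.mem_ofPred_eq, and_iff_left_of_imp fun h => ?_,
        nu_eq_zero_iff fun e he => hE e (hs he), Set.mem_singleton_iff]
      exact missable_eq_univ_of_nu_eq_zero h ▸ Set.subset_univ N
    · exact (stablyVanishesAbove_nu_eq_of_pos hm ih E hE).2 N

theorem stablyVanishesAbove_nu_lt (hE : ∀ e ∈ E, ¬e.IsDiag) (k : ℕ) :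
    StablyVanishesAbove F E {s | nu s < k} (3 * (k - 1)) := by
  refine .of_fibers (f := nu) ?_ (fun s _ t _ hst => nu_mono hst) fun m => ?_
  · exact IsLowerSet.ordConnected fun s t hts hs => (nu_mono hts).trans_lt hs
  by_cases hm : m < k
  · refine ((stablyVanishesAbove_subset_missable m E hE ∅).mono (by omega)).congr fun s _ => ?_
    exact ⟨fun h => ⟨h.1.trans_lt hm, h.1⟩, fun h => ⟨h.2, Set.empty_subset _⟩⟩
  · refine .of_isEmpty ?_ _
    rintro s - ⟨hs, rfl⟩
    exact hm hs

end GallaiEdmondsFamilies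

/-- For `k ≥ 2` and any finite simple graph with edge set `E`, the non-matching complex
`NM_k(E)` has vanishing reduced homology (over any field) in all dimensions `d ≥ 3k - 3`. -/
theorem NM_vanishing {V : Type} [LinearOrder (Sym2 V)] (F : Type) [Field F]
    (k : ℕ) (hk : 2 ≤ k) (E : Finset (Sym2 V)) (hs : ∀ e ∈ E, ¬ e.IsDiag) :
    ∀ d, 3 * k - 3 ≤ d → VanishesAt F (NM k E) d := by
  intro d hd
  have hNM : (NM k E : Set (Finset (Sym2 V))) = {s ∈ {s | nu s < k} | s ⊆ E} := by
    ext s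
    simp [NM, and_comm]
  have hlower : IsLowerSet (NM k E : Set (Finset (Sym2 V))) := by
    rw [hNM]
    exact fun s t hts hs => ⟨(nu_mono hts).trans_lt hs.1, hts.trans hs.2⟩
  refine RelVanishes.vanishesAt hlower ?_
  rw [hNM]
  exact (stablyVanishesAbove_nu_lt hs k).relVanishes (by omega)
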